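/- arXiv:2201.01382 — 3 statements merged into one kernel-verified Lean document; each statement's English description precedes it below -/
import Mathlib

section
/- Let a > 0, let ν be a probability measure on ℝ^d whose support is contained in a ball of radius R, let γ_d^a be the centered Gaussian with covariance a·Id_d, and let μ = γ_d^a ⋆ ν. If √a·e^{R²/(2a)} ≤ 1, then the standard Gaussian γ_d is majorized by μ: for every t ∈ ℝ, ∫_t^∞ F_{γ_d}(λ) dλ ≤ ∫_t^∞ F_μ(λ) dλ. -/
open MeasureTheory Real Set
open scoped ENNReal NNReal

noncomputable section

/-- `ℝ^d` as a Euclidean space. -/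
abbrev Ed (d : ℕ) : Type := EuclideanSpace ℝ (Fin d)

/-- The standard Gaussian measure `γ_d` on `ℝ^d` (mean 0, identity covariance). -/
def stdGaussian (d : ℕ) : Measure (Ed d) :=
  (volume : Measure (Ed d)).withDensity
    fun x => ENNReal.ofReal ((2 * π) ^ (-(d : ℝ) / 2) * Real.exp (-‖x‖ ^ 2 / 2))

/-- The centered Gaussian measure on `ℝ^d` with covariance `a·Id`. -/
def gaussianCov (d : ℕ) (a : ℝ) : Measure (Ed d) :=
  (volume : Measure (Ed d)).withDensity
    fun x => ENNReal.ofReal ((2 * π * a) ^ (-(d : ℝ) / 2) * Real.exp (-‖x‖ ^ 2 / (2 * a)))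

/-- The Hessian quadratic form of `f` at `x`, evaluated at the direction `(w, w)`. -/
def hessQF {d : ℕ} (f : Ed d → ℝ) (x w : Ed d) : ℝ :=
  fderiv ℝ (fun y => fderiv ℝ f y w) x w

/-- The (topological) support of a measure on `ℝ^d`. -/
def msupport {d : ℕ} (μ : Measure (Ed d)) : Set (Ed d) :=
  {x | ∀ U : Set (Ed d), IsOpen U → x ∈ U → μ U ≠ 0}

/-- The convolution `μ ⋆ ν` of two measures on `ℝ^d`: the law of `X + Y`
with `X ∼ μ`, `Y ∼ ν` independent. -/
def mconv {d : ℕ} (μ ν : Measure (Ed d)) : Measure (Ed d) :=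
  Measure.map (fun p : Ed d × Ed d => p.1 + p.2) (μ.prod ν)

/-- `μ` is `κ`-log-concave with density `p` w.r.t. Lebesgue measure: its support is
convex and `−∇² log p(x) ⪰ κ·Id` for `μ`-a.e. `x`. -/
def KLogConcaveD {d : ℕ} (κ : ℝ) (μ : Measure (Ed d)) (p : Ed d → ℝ) : Prop :=
  μ = (volume : Measure (Ed d)).withDensity (fun x => ENNReal.ofReal (p x)) ∧
    Convex ℝ (msupport μ) ∧
    ∀ᵐ x ∂μ, ∀ w : Ed d, hessQF (fun y => Real.log (p y)) x w ≤ -(κ * ‖w‖ ^ 2)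

/-- `μ` is `κ`-log-concave. -/
def KLogConcave {d : ℕ} (κ : ℝ) (μ : Measure (Ed d)) : Prop :=
  ∃ p : Ed d → ℝ, KLogConcaveD κ μ p

/-- `μ` is `β`-semi-log-convex with density `p` w.r.t. Lebesgue measure:
`−∇² log p(x) ⪯ β·Id` for every `x`. -/
def SemiLogConvexD {d : ℕ} (β : ℝ) (μ : Measure (Ed d)) (p : Ed d → ℝ) : Prop :=
  μ = (volume : Measure (Ed d)).withDensity (fun x => ENNReal.ofReal (p x)) ∧
    ∀ x w : Ed d, -(β * ‖w‖ ^ 2) ≤ hessQF (fun y => Real.log (p y)) x w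

/-- `μ` is `β`-semi-log-convex. -/
def SemiLogConvex {d : ℕ} (β : ℝ) (μ : Measure (Ed d)) : Prop :=
  ∃ p : Ed d → ℝ, SemiLogConvexD β μ p

/-- The Ornstein–Uhlenbeck semigroup:
`Q_t g(x) = ∫ g(e^{−t}x + √(1−e^{−2t})·y) dγ_d(y)`. -/
def OU {d : ℕ} (t : ℝ) (f : Ed d → ℝ) (x : Ed d) : ℝ :=
  ∫ y, f (Real.exp (-t) • x + Real.sqrt (1 - Real.exp (-2 * t)) • y) ∂(stdGaussian d)

/-- The heat semigroup: `P_t f(x) = ∫ f(x + √t·y) dγ_d(y)`. -/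
def heatSG {d : ℕ} (t : ℝ) (f : Ed d → ℝ) (x : Ed d) : ℝ :=
  ∫ y, f (x + Real.sqrt t • y) ∂(stdGaussian d)

/-- The entropy of `g` relative to `μ`:
`Ent_μ(g) = ∫ log(g)·g dμ − log(∫ g dμ)·∫ g dμ`. -/
def entRel {d : ℕ} (μ : Measure (Ed d)) (g : Ed d → ℝ) : ℝ :=
  ∫ x, Real.log (g x) * g x ∂μ - Real.log (∫ x, g x ∂μ) * ∫ x, g x ∂μ

/-- The variance of `g` under `μ`. -/
def varOf {d : ℕ} (μ : Measure (Ed d)) (g : Ed d → ℝ) : ℝ :=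
  ∫ x, g x ^ 2 ∂μ - (∫ x, g x ∂μ) ^ 2

/-- The distribution function of a density `p`: `F(λ) = Vol({x : p(x) ≥ λ})`. -/
def distFun {d : ℕ} (p : Ed d → ℝ) (l : ℝ) : ℝ≥0∞ :=
  (volume : Measure (Ed d)) {x | l ≤ p x}

/-- The density of the standard Gaussian measure w.r.t. Lebesgue measure. -/
def gaussPdf (d : ℕ) (x : Ed d) : ℝ :=
  (2 * π) ^ (-(d : ℝ) / 2) * Real.exp (-‖x‖ ^ 2 / 2)

/-- The `q`-Rényi entropy of a density `p`: `h_q = log(∫ p^q)/(1−q)`. -/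
def renyi {d : ℕ} (p : Ed d → ℝ) (q : ℝ) : ℝ :=
  Real.log (∫ x, p x ^ q ∂(volume : Measure (Ed d))) / (1 - q)

/-! Let `g` be the centered Gaussian density with covariance `b·Id`. Splitting
`g = min g t + (g - t)⁺` shows that `g ≺ p` follows once `g` gives each of its own superlevel sets
`{g ≥ t}` at most the mass `p` does. These sets are centered balls, and by Fubini it is enough that
`∫_B g` is at most the mass of `B` under each translate `y + γ_d^a`. Rotations preserve `γ_d^a`, so
`y` may be moved onto the diagonal; `‖x‖²` is then a sum of independent coordinates and the
comparison can be made one coordinate at a time. On the line, symmetrize the shifted density: its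
ratio to the centered one is `C · cosh (k x) · exp (-c x²)` with `C ≥ 1`, and
`log (cosh (θ x)) ≥ θ² log (cosh x)` for `|θ| ≤ 1` forces this ratio to cross `1` at most once on
`[0, ∞)`, from above. -/

section Majorization

variable {α : Type*} [MeasurableSpace α] {ρ : Measure α}

lemma lintegral_ofReal_sub_eq_lintegral_meas_le {f : α → ℝ} (hf : Measurable f) (t : ℝ) :
    ∫⁻ x, ENNReal.ofReal (f x - t) ∂ρ = ∫⁻ l in Ioi t, ρ {x | l ≤ f x} := by
  have hpos_part : ∫⁻ x, ENNReal.ofReal (f x - t) ∂ρ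
      = ∫⁻ x, ENNReal.ofReal (max (f x - t) 0) ∂ρ := by
    simp only [ENNReal.ofReal, Real.toNNReal, max_assoc, max_self]
  rw [hpos_part, lintegral_eq_lintegral_meas_le (f := fun x => max (f x - t) 0) _
      (ae_of_all _ fun x => le_max_right _ _) (by fun_prop),
    ← (measurePreserving_add_right volume t).setLIntegral_comp_preimage_emb
      (measurableEmbedding_addRight t) _ (Ioi t), preimage_add_const_Ioi, sub_self]
  refine setLIntegral_congr_fun measurableSet_Ioi fun l hl => ?_
  simp only [le_max_iff, le_sub_iff_add_le, (mem_Ioi.1 hl).not_ge, or_false]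

-- For non-measurable `p` the lower integral on the left may be strictly smaller.
lemma lintegral_ofReal_sub_le_lintegral_meas_le (p : α → ℝ) (t : ℝ) :
    ∫⁻ x, ENNReal.ofReal (p x - t) ∂ρ ≤ ∫⁻ l in Ioi t, ρ {x | l ≤ p x} := by
  obtain ⟨g, hg, hgp, hint⟩ :=
    exists_measurable_le_lintegral_eq (μ := ρ) fun x => ENNReal.ofReal (p x - t)
  have hg_top (x : α) : g x ≠ ∞ := ((hgp x).trans_lt ENNReal.ofReal_lt_top).ne
  calc ∫⁻ x, ENNReal.ofReal (p x - t) ∂ρ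
      = ∫⁻ x, ENNReal.ofReal ((g x).toReal + t - t) ∂ρ := by
        simp only [hint, add_sub_cancel_right, ENNReal.ofReal_toReal (hg_top _)]
    _ = ∫⁻ l in Ioi t, ρ {x | l ≤ (g x).toReal + t} :=
        lintegral_ofReal_sub_eq_lintegral_meas_le (by fun_prop) t
    _ ≤ ∫⁻ l in Ioi t, ρ {x | l ≤ p x} := by
        refine setLIntegral_mono' measurableSet_Ioi fun l hl => measure_mono fun x hx => ?_
        have hlt : 0 < l - t := sub_pos.2 hl
        have hlg : ENNReal.ofReal (l - t) ≤ ENNReal.ofReal (p x - t) :=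
          (ENNReal.ofReal_le_of_le_toReal (sub_le_iff_le_add.2 hx)).trans (hgp x)
        exact sub_le_sub_iff_right t |>.1 (ENNReal.ofReal_le_ofReal_iff' |>.1 hlg |>.resolve_right
          hlt.not_ge)

lemma lintegral_meas_le_mono_of_withDensity_le {f p : α → ℝ} (hf : Measurable f) {t : ℝ}
    (ht : 0 ≤ t) (hfin : ρ.withDensity (fun x => ENNReal.ofReal (f x)) {x | t ≤ f x} ≠ ∞)
    (hle : ρ.withDensity (fun x => ENNReal.ofReal (f x)) {x | t ≤ f x} ≤
      ρ.withDensity (fun x => ENNReal.ofReal (p x)) {x | t ≤ f x}) :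
    ∫⁻ l in Ioi t, ρ {x | l ≤ f x} ≤ ∫⁻ l in Ioi t, ρ {x | l ≤ p x} := by
  set A := {x | t ≤ f x} with hA_def
  have hA : MeasurableSet A := measurableSet_le measurable_const hf
  have hf_eq : ρ.withDensity (fun x => ENNReal.ofReal (f x)) A
      = ENNReal.ofReal t * ρ A + ∫⁻ l in Ioi t, ρ {x | l ≤ f x} := by
    have hsupp : ∫⁻ x in A, ENNReal.ofReal (f x - t) ∂ρ = ∫⁻ x, ENNReal.ofReal (f x - t) ∂ρ :=
      setLIntegral_eq_of_support_subset fun x hx => by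
        simpa [hA_def] using (lt_of_not_ge fun h => hx (ENNReal.ofReal_of_nonpos h)).le
    rw [← lintegral_ofReal_sub_eq_lintegral_meas_le hf, ← hsupp, ← setLIntegral_const,
      ← lintegral_add_left measurable_const, withDensity_apply _ hA]
    refine setLIntegral_congr_fun hA fun x hx => ?_
    simp only [← ENNReal.ofReal_add ht (sub_nonneg.2 hx), add_sub_cancel]
  have hp_le : ρ.withDensity (fun x => ENNReal.ofReal (p x)) A
      ≤ ENNReal.ofReal t * ρ A + ∫⁻ l in Ioi t, ρ {x | l ≤ p x} := by
    calc ρ.withDensity (fun x => ENNReal.ofReal (p x)) A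
        ≤ ∫⁻ x in A, ENNReal.ofReal t + ENNReal.ofReal (p x - t) ∂ρ := by
          rw [withDensity_apply _ hA]
          refine lintegral_mono fun x => ?_
          simpa using ENNReal.ofReal_add_le (p := t) (q := p x - t)
      _ = ENNReal.ofReal t * ρ A + ∫⁻ x in A, ENNReal.ofReal (p x - t) ∂ρ := by
          rw [lintegral_add_left measurable_const, setLIntegral_const]
      _ ≤ ENNReal.ofReal t * ρ A + ∫⁻ l in Ioi t, ρ {x | l ≤ p x} := by
          gcongr
          exact (setLIntegral_le_lintegral _ _).trans
            (lintegral_ofReal_sub_le_lintegral_meas_le p t)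
  have hcancel : ENNReal.ofReal t * ρ A ≠ ∞ :=
    ne_top_of_le_ne_top hfin (hf_eq ▸ le_self_add)
  exact (ENNReal.add_le_add_iff_left hcancel).1 (hf_eq ▸ hle.trans hp_le)

lemma ae_ne_zero_of_absolutelyContinuous_withDensity [SFinite ρ] {h : α → ℝ≥0∞}
    (hρ : ρ ≪ ρ.withDensity h) : ∀ᵐ x ∂ρ, h x ≠ 0 := by
  have hnull : ρ.withDensity h {x | h x = 0} = 0 := by
    rw [withDensity_apply']
    simpa using setLIntegral_mono (μ := ρ) (s := {x | h x = 0}) (f := h)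
      measurable_zero fun x hx => le_of_eq hx
  exact mem_ae_iff.2 (by simpa [compl_ofPred] using hρ hnull)

theorem lintegral_meas_le_mono_of_forall_withDensity_le [SFinite ρ] {f p : α → ℝ}
    (hf : Measurable f) [IsFiniteMeasure (ρ.withDensity fun x => ENNReal.ofReal (f x))]
    (hac : ρ ≪ ρ.withDensity fun x => ENNReal.ofReal (p x))
    (hle : ∀ t, 0 ≤ t → ρ.withDensity (fun x => ENNReal.ofReal (f x)) {x | t ≤ f x} ≤
      ρ.withDensity (fun x => ENNReal.ofReal (p x)) {x | t ≤ f x}) (t : ℝ) :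
    ∫⁻ l in Ioi t, ρ {x | l ≤ f x} ≤ ∫⁻ l in Ioi t, ρ {x | l ≤ p x} := by
  have hnonneg (t : ℝ) (ht : 0 ≤ t) :
      ∫⁻ l in Ioi t, ρ {x | l ≤ f x} ≤ ∫⁻ l in Ioi t, ρ {x | l ≤ p x} :=
    lintegral_meas_le_mono_of_withDensity_le hf ht (measure_ne_top _ _) (hle t ht)
  rcases le_total 0 t with ht | ht
  · exact hnonneg t ht
  have hp_pos : ∀ᵐ x ∂ρ, 0 < p x := by
    filter_upwards [ae_ne_zero_of_absolutelyContinuous_withDensity hac] with x hx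
    simpa using hx
  simp only [← Ioc_union_Ioi_eq_Ioi ht,
    lintegral_union measurableSet_Ioi (Ioc_disjoint_Ioi le_rfl)]
  refine add_le_add (setLIntegral_mono' measurableSet_Ioc fun l hl => ?_) (hnonneg 0 le_rfl)
  exact measure_mono_ae (hp_pos.mono fun x hx _ => hl.2.trans hx.le)

end Majorization

section Convolution

variable {G : Type*} [MeasurableSpace G]

lemma conv_apply_eq_lintegral [AddMonoid G] [MeasurableAdd₂ G] (γ ν : Measure G) [SFinite γ]
    [SFinite ν] {A : Set G} (hA : MeasurableSet A) :
    γ.conv ν A = ∫⁻ y, γ {x | x + y ∈ A} ∂ν := by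
  rw [Measure.conv, Measure.map_apply measurable_add hA,
    Measure.prod_apply_symm (measurable_add hA)]
  rfl

lemma le_conv_apply_of_ae_le [AddMonoid G] [MeasurableAdd₂ G] {γ ν : Measure G} [SFinite γ]
    [IsProbabilityMeasure ν] {A : Set G} (hA : MeasurableSet A) {m : ℝ≥0∞}
    (hm : ∀ᵐ y ∂ν, m ≤ γ {x | x + y ∈ A}) : m ≤ γ.conv ν A := by
  rw [conv_apply_eq_lintegral γ ν hA]
  simpa using lintegral_mono_ae hm

lemma absolutelyContinuous_conv_of_absolutelyContinuous [AddGroup G] [MeasurableAdd₂ G]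
    {ρ γ ν : Measure G} [ρ.IsAddRightInvariant] [SFinite γ] [SFinite ν] [NeZero ν] (hρ : ρ ≪ γ) :
    ρ ≪ γ.conv ν := by
  refine Measure.AbsolutelyContinuous.mk fun Z hZ hnull => ?_
  have hmeas : Measurable fun y => γ {x | x + y ∈ Z} :=
    measurable_measure_prodMk_right (measurable_add hZ)
  rw [conv_apply_eq_lintegral γ ν hZ, lintegral_eq_zero_iff hmeas] at hnull
  obtain ⟨y, hy⟩ := hnull.exists
  rw [← measure_preimage_add_right ρ y Z]
  exact hρ hy

end Convolution

section Product

lemma prod_setOf_add_le_mono {α β : Type*} [MeasurableSpace α] [MeasurableSpace β]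
    {μ μ' : Measure α} {ν ν' : Measure β} [SFinite μ] [SFinite μ'] [SFinite ν] [SFinite ν']
    {f f' : α → ℝ} {g g' : β → ℝ} (hf : Measurable f) (hf' : Measurable f') (hg : Measurable g)
    (hg' : Measurable g') (hμ : ∀ c, μ {x | f x ≤ c} ≤ μ' {x | f' x ≤ c})
    (hν : ∀ c, ν {y | g y ≤ c} ≤ ν' {y | g' y ≤ c}) (c : ℝ) :
    μ.prod ν {z | f z.1 + g z.2 ≤ c} ≤ μ'.prod ν' {z | f' z.1 + g' z.2 ≤ c} := by
  have hmeas {f : α → ℝ} {g : β → ℝ} (hf : Measurable f) (hg : Measurable g) :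
      MeasurableSet {z : α × β | f z.1 + g z.2 ≤ c} :=
    measurableSet_le (by fun_prop) measurable_const
  calc μ.prod ν {z | f z.1 + g z.2 ≤ c} ≤ μ.prod ν' {z | f z.1 + g' z.2 ≤ c} := by
        rw [Measure.prod_apply (hmeas hf hg), Measure.prod_apply (hmeas hf hg')]
        refine lintegral_mono fun x => ?_
        simpa [le_sub_iff_add_le'] using hν (c - f x)
    _ ≤ μ'.prod ν' {z | f' z.1 + g' z.2 ≤ c} := by
        rw [Measure.prod_apply_symm (hmeas hf hg'), Measure.prod_apply_symm (hmeas hf' hg')]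
        refine lintegral_mono fun y => ?_
        simpa [le_sub_iff_add_le] using hμ (c - g' y)

lemma measurePreserving_piFinSucc {n : ℕ} {α : Fin (n + 1) → Type*} [∀ i, MeasurableSpace (α i)]
    (μ : ∀ i, Measure (α i)) [∀ i, SigmaFinite (μ i)] :
    MeasurePreserving (fun x : ∀ i, α i => (x 0, fun i : Fin n => x i.succ)) (Measure.pi μ)
      ((μ 0).prod (Measure.pi fun i : Fin n => μ i.succ)) :=
  measurePreserving_piFinSuccAbove μ 0

lemma pi_setOf_sum_le_mono {n : ℕ} {α : Fin n → Type*} [∀ i, MeasurableSpace (α i)]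
    {μ ν : ∀ i, Measure (α i)} [∀ i, SigmaFinite (μ i)] [∀ i, SigmaFinite (ν i)]
    {f g : ∀ i, α i → ℝ} (hf : ∀ i, Measurable (f i)) (hg : ∀ i, Measurable (g i))
    (h : ∀ i c, μ i {x | f i x ≤ c} ≤ ν i {x | g i x ≤ c}) (c : ℝ) :
    Measure.pi μ {x | ∑ i, f i (x i) ≤ c} ≤ Measure.pi ν {x | ∑ i, g i (x i) ≤ c} := by
  induction n generalizing c with
  | zero => simp [Subsingleton.elim μ ν]
  | succ n ih =>
    have hsplit {μ : ∀ i, Measure (α i)} [∀ i, SigmaFinite (μ i)] {f : ∀ i, α i → ℝ}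
        (hf : ∀ i, Measurable (f i)) :
        Measure.pi μ {x | ∑ i, f i (x i) ≤ c}
          = ((μ 0).prod (Measure.pi fun i : Fin n => μ i.succ))
            {z | f 0 z.1 + ∑ i : Fin n, f i.succ (z.2 i) ≤ c} := by
      rw [← (measurePreserving_piFinSucc μ).measure_preimage
        (measurableSet_le (by fun_prop) measurable_const).nullMeasurableSet]
      simp only [Fin.sum_univ_succ, preimage_ofPred_eq]
    rw [hsplit hf, hsplit hg]
    exact prod_setOf_add_le_mono (hf 0) (hg 0) (by fun_prop) (by fun_prop)
      (h 0) (ih (fun i => hf i.succ) (fun i => hg i.succ) fun i => h i.succ) c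

lemma lintegral_fin_prod_eq_prod_lintegral {n : ℕ} {α : Fin n → Type*}
    [∀ i, MeasurableSpace (α i)] {μ : ∀ i, Measure (α i)} [∀ i, SigmaFinite (μ i)]
    {f : ∀ i, α i → ℝ≥0∞} (hf : ∀ i, Measurable (f i)) :
    ∫⁻ x, ∏ i, f i (x i) ∂Measure.pi μ = ∏ i, ∫⁻ x, f i x ∂μ i := by
  induction n with
  | zero => simp
  | succ n ih =>
    calc ∫⁻ x, ∏ i, f i (x i) ∂Measure.pi μ
        = ∫⁻ z, f 0 z.1 * ∏ i : Fin n, f i.succ (z.2 i)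
            ∂(μ 0).prod (Measure.pi fun i : Fin n => μ i.succ) := by
          simp only [Fin.prod_univ_succ]
          exact (measurePreserving_piFinSucc μ).lintegral_comp
            (f := fun z => f 0 z.1 * ∏ i : Fin n, f i.succ (z.2 i)) (by fun_prop)
      _ = (∫⁻ x, f 0 x ∂μ 0) * ∫⁻ x, ∏ i : Fin n, f i.succ (x i) ∂Measure.pi fun i => μ i.succ :=
          lintegral_prod_mul (f := f 0) (g := fun x : ∀ i : Fin n, α i.succ => ∏ i, f i.succ (x i))
            (hf 0).aemeasurable (Finset.measurable_prod _ fun i _ =>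
              (hf i.succ).comp (measurable_pi_apply i)).aemeasurable
      _ = ∏ i, ∫⁻ x, f i x ∂μ i := by rw [ih fun i => hf i.succ, Fin.prod_univ_succ]

lemma pi_withDensity_eq_withDensity_prod {n : ℕ} {α : Fin n → Type*}
    [∀ i, MeasurableSpace (α i)] {μ : ∀ i, Measure (α i)} [∀ i, SigmaFinite (μ i)]
    {f : ∀ i, α i → ℝ≥0∞} (hf : ∀ i, Measurable (f i))
    [∀ i, SigmaFinite ((μ i).withDensity (f i))] :
    Measure.pi (fun i => (μ i).withDensity (f i))
      = (Measure.pi μ).withDensity fun x => ∏ i, f i (x i) := by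
  refine Measure.pi_eq fun s hs => ?_
  simp only [withDensity_apply _ (MeasurableSet.univ_pi hs), withDensity_apply _ (hs _),
    Measure.restrict_pi_pi, lintegral_fin_prod_eq_prod_lintegral hf]

lemma measurePreserving_withDensity_comp {α β : Type*} [MeasurableSpace α] [MeasurableSpace β]
    {ρ : Measure α} {σ : Measure β} {T : α → β} (hT : MeasurePreserving T ρ σ) {h : β → ℝ≥0∞}
    (hh : Measurable h) :
    MeasurePreserving T (ρ.withDensity fun x => h (T x)) (σ.withDensity h) := by
  refine ⟨hT.measurable, Measure.ext fun s hs => ?_⟩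
  rw [Measure.map_apply hT.measurable hs, withDensity_apply _ (hT.measurable hs),
    withDensity_apply _ hs, hT.setLIntegral_comp_preimage hs hh]

end Product

section LogCosh

lemma hasDerivAt_tanh (x : ℝ) : HasDerivAt tanh (1 / cosh x ^ 2) x := by
  have hquot := (hasDerivAt_sinh x).div (hasDerivAt_cosh x) (cosh_pos x).ne'
  rw [← sq, ← sq, cosh_sq_sub_sinh_sq] at hquot
  exact hquot.congr_of_eventuallyEq (.of_forall tanh_eq_sinh_div_cosh)

lemma concaveOn_tanh : ConcaveOn ℝ (Ici 0) tanh := by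
  refine AntitoneOn.concaveOn_of_deriv (convex_Ici 0)
    (fun x _ => (hasDerivAt_tanh x).continuousAt.continuousWithinAt)
    (fun x _ => (hasDerivAt_tanh x).differentiableAt.differentiableWithinAt) fun x hx y hy hxy => ?_
  rw [interior_Ici, mem_Ioi] at hx hy
  have hcosh : cosh x ≤ cosh y := cosh_le_cosh.2 (by rwa [abs_of_pos hx, abs_of_pos hy])
  rw [(hasDerivAt_tanh x).deriv, (hasDerivAt_tanh y).deriv]
  gcongr

lemma mul_tanh_le_tanh_mul {θ t : ℝ} (h0 : 0 ≤ θ) (h1 : θ ≤ 1) (ht : 0 ≤ t) :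
    θ * tanh t ≤ tanh (θ * t) := by
  simpa using concaveOn_tanh.2 (mem_Ici.2 ht) self_mem_Ici h0 (sub_nonneg.2 h1)
    (add_sub_cancel _ _)

lemma hasDerivAt_log_cosh_mul (θ x : ℝ) :
    HasDerivAt (fun x => log (cosh (θ * x))) (θ * tanh (θ * x)) x := by
  have hlin : HasDerivAt (fun x => θ * x) θ x := by simpa using (hasDerivAt_id x).const_mul θ
  refine (hlin.cosh.log (cosh_pos _).ne').congr_deriv ?_
  rw [tanh_eq_sinh_div_cosh]
  ring

lemma sq_mul_log_cosh_le_log_cosh_mul {θ : ℝ} (hθ : |θ| ≤ 1) (t : ℝ) :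
    θ ^ 2 * log (cosh t) ≤ log (cosh (θ * t)) := by
  wlog hpos : 0 ≤ θ ∧ 0 ≤ t generalizing θ t
  · simpa [← abs_mul] using this (θ := |θ|) (by rwa [abs_abs]) |t| ⟨abs_nonneg _, abs_nonneg _⟩
  obtain ⟨hθ0, ht⟩ := hpos
  have hderiv (x : ℝ) : HasDerivAt (fun x => log (cosh (θ * x)) - θ ^ 2 * log (cosh x))
      (θ * (tanh (θ * x) - θ * tanh x)) x := by
    have hlog : HasDerivAt (fun x => log (cosh x)) (tanh x) x := by
      simpa using hasDerivAt_log_cosh_mul 1 x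
    exact ((hasDerivAt_log_cosh_mul θ x).sub (hlog.const_mul (θ ^ 2))).congr_deriv (by ring)
  have hmono : MonotoneOn (fun x => log (cosh (θ * x)) - θ ^ 2 * log (cosh x)) (Ici 0) := by
    refine monotoneOn_of_deriv_nonneg (convex_Ici 0)
      (fun x _ => (hderiv x).continuousAt.continuousWithinAt)
      (fun x _ => (hderiv x).differentiableAt.differentiableWithinAt) fun x hx => ?_
    rw [interior_Ici, mem_Ioi] at hx
    rw [(hderiv x).deriv]
    exact mul_nonneg hθ0
      (sub_nonneg.2 (mul_tanh_le_tanh_mul hθ0 ((le_abs_self θ).trans hθ) hx.le))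
  simpa using hmono self_mem_Ici (mem_Ici.2 ht) ht

lemma add_log_cosh_sub_sq_nonneg_of_abs_le {c k b x r : ℝ} (hc : 0 ≤ c) (hx : |x| ≤ |r|)
    (hr : 0 ≤ c + log (cosh (k * r)) - b * r ^ 2) : 0 ≤ c + log (cosh (k * x)) - b * x ^ 2 := by
  obtain ⟨θ, hθ, rfl⟩ : ∃ θ, |θ| ≤ 1 ∧ x = θ * r := by
    rcases eq_or_ne r 0 with rfl | hr0
    · exact ⟨0, by simp, by simpa using hx⟩
    · exact ⟨x / r, by rw [abs_div]; exact div_le_one_of_le₀ hx (abs_nonneg r), by field_simp⟩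
  calc 0 ≤ (1 - θ ^ 2) * c + θ ^ 2 * (c + log (cosh (k * r)) - b * r ^ 2) :=
        add_nonneg (mul_nonneg (sub_nonneg.2 ((sq_le_one_iff_abs_le_one θ).2 hθ)) hc)
          (mul_nonneg (sq_nonneg θ) hr)
    _ = c + θ ^ 2 * log (cosh (k * r)) - b * (θ * r) ^ 2 := by ring
    _ ≤ c + log (cosh (θ * (k * r))) - b * (θ * r) ^ 2 := by
        gcongr
        exact sq_mul_log_cosh_le_log_cosh_mul hθ (k * r)
    _ = c + log (cosh (k * (θ * r))) - b * (θ * r) ^ 2 := by rw [mul_left_comm]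

end LogCosh

section OneDimensional

open ProbabilityTheory

/-- The density of the even mixture of `N(m, v)` and `N(-m, v)`. It gives symmetric sets the same
mass as `N(m, v)`, but unlike the latter it can be compared pointwise with a centered Gaussian. -/
def symmGaussianPDFReal (m : ℝ) (v : ℝ≥0) (x : ℝ) : ℝ :=
  (gaussianPDFReal m v x + gaussianPDFReal (-m) v x) / 2

lemma symmGaussianPDFReal_zero_left (v : ℝ≥0) (x : ℝ) :
    symmGaussianPDFReal 0 v x = gaussianPDFReal 0 v x := by
  simp [symmGaussianPDFReal]

lemma symmGaussianPDFReal_pos (m : ℝ) {v : ℝ≥0} (hv : v ≠ 0) (x : ℝ) :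
    0 < symmGaussianPDFReal m v x :=
  half_pos (add_pos (gaussianPDFReal_pos m v x hv) (gaussianPDFReal_pos (-m) v x hv))

lemma symmGaussianPDFReal_eq_mul_cosh (m : ℝ) {v : ℝ≥0} (hv : v ≠ 0) (x : ℝ) :
    symmGaussianPDFReal m v x
      = gaussianPDFReal m v 0 * cosh (m / v * x) * exp (-(x ^ 2 / (2 * v))) := by
  have hv' : (v : ℝ) ≠ 0 := NNReal.coe_ne_zero.2 hv
  have hpdf (s : ℝ) : gaussianPDFReal s v x
      = gaussianPDFReal s v 0 * exp (s / v * x) * exp (-(x ^ 2 / (2 * v))) := by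
    simp only [gaussianPDFReal, mul_assoc, ← exp_add]
    congr 2
    field_simp
    ring
  have hneg : gaussianPDFReal (-m) v 0 = gaussianPDFReal m v 0 := by simp [gaussianPDFReal]
  rw [symmGaussianPDFReal, hpdf m, hpdf (-m), hneg, cosh_eq, neg_div, neg_mul]
  ring

lemma log_symmGaussianPDFReal (m : ℝ) {v : ℝ≥0} (hv : v ≠ 0) (x : ℝ) :
    log (symmGaussianPDFReal m v x)
      = log (gaussianPDFReal m v 0) + log (cosh (m / v * x)) - x ^ 2 / (2 * v) := by
  have hpos := gaussianPDFReal_pos m v 0 hv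
  rw [symmGaussianPDFReal_eq_mul_cosh m hv, log_mul (by positivity) (by positivity),
    log_mul hpos.ne' (by positivity), log_exp, sub_eq_add_neg]

lemma gaussianPDFReal_le_symmGaussianPDFReal_of_abs_le {m : ℝ} {v w : ℝ≥0} (hv : v ≠ 0)
    (hw : w ≠ 0) (h0 : gaussianPDFReal 0 w 0 ≤ gaussianPDFReal m v 0) {x r : ℝ} (hx : |x| ≤ |r|)
    (hr : gaussianPDFReal 0 w r ≤ symmGaussianPDFReal m v r) :
    gaussianPDFReal 0 w x ≤ symmGaussianPDFReal m v x := by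
  have hlog (x : ℝ) : gaussianPDFReal 0 w x ≤ symmGaussianPDFReal m v x ↔
      0 ≤ log (gaussianPDFReal m v 0) - log (gaussianPDFReal 0 w 0) + log (cosh (m / v * x))
        - ((2 * v : ℝ)⁻¹ - (2 * w : ℝ)⁻¹) * x ^ 2 := by
    rw [← symmGaussianPDFReal_zero_left w,
      ← log_le_log_iff (symmGaussianPDFReal_pos 0 hw x) (symmGaussianPDFReal_pos m hv x),
      log_symmGaussianPDFReal m hv, log_symmGaussianPDFReal 0 hw, ← sub_nonneg]
    simp only [zero_div, zero_mul, cosh_zero, log_one]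
    ring_nf
  rw [hlog] at hr ⊢
  exact add_log_cosh_sub_sq_nonneg_of_abs_le
    (sub_nonneg.2 (log_le_log (gaussianPDFReal_pos 0 w 0 hw) h0)) hx hr

lemma gaussianReal_apply_eq_lintegral_symmGaussianPDFReal (m : ℝ) {v : ℝ≥0} (hv : v ≠ 0)
    {S : Set ℝ} (hS : MeasurableSet S) (hsymm : Neg.neg ⁻¹' S = S) :
    gaussianReal m v S = ∫⁻ x in S, ENNReal.ofReal (symmGaussianPDFReal m v x) := by
  have hneg : gaussianReal (-m) v S = gaussianReal m v S := by
    rw [← gaussianReal_map_neg, Measure.map_apply measurable_neg hS, hsymm]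
  have hadd : gaussianReal m v S + gaussianReal (-m) v S
      = 2 * ∫⁻ x in S, ENNReal.ofReal (symmGaussianPDFReal m v x) := by
    rw [gaussianReal_apply _ hv, gaussianReal_apply _ hv, ← lintegral_add_left (by fun_prop),
      ← lintegral_const_mul' _ _ ENNReal.ofNat_ne_top]
    refine lintegral_congr fun x => ?_
    rw [gaussianPDF, gaussianPDF,
      ← ENNReal.ofReal_add (gaussianPDFReal_nonneg _ _ _) (gaussianPDFReal_nonneg _ _ _),
      ← ENNReal.ofReal_ofNat 2, ← ENNReal.ofReal_mul zero_le_two, symmGaussianPDFReal,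
      mul_div_cancel₀ _ two_ne_zero]
  rwa [hneg, ← two_mul, ENNReal.mul_right_inj two_ne_zero ENNReal.ofNat_ne_top] at hadd

lemma gaussianReal_setOf_sq_le_mono {m : ℝ} {v w : ℝ≥0} (hv : v ≠ 0) (hw : w ≠ 0)
    (h0 : gaussianPDFReal 0 w 0 ≤ gaussianPDFReal m v 0) (c : ℝ) :
    gaussianReal 0 w {x | x ^ 2 ≤ c} ≤ gaussianReal m v {x | x ^ 2 ≤ c} := by
  set S := {x : ℝ | x ^ 2 ≤ c} with hS_def
  have hS : MeasurableSet S := measurableSet_le (by fun_prop) measurable_const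
  have hsymm : Neg.neg ⁻¹' S = S := by simp [hS_def]
  have happly {T : Set ℝ} (hT : MeasurableSet T) (hTsymm : Neg.neg ⁻¹' T = T) :
      gaussianReal 0 w T = ∫⁻ x in T, ENNReal.ofReal (gaussianPDFReal 0 w x) ∧
        gaussianReal m v T = ∫⁻ x in T, ENNReal.ofReal (symmGaussianPDFReal m v x) :=
    ⟨gaussianReal_apply 0 hw T, gaussianReal_apply_eq_lintegral_symmGaussianPDFReal m hv hT hTsymm⟩
  by_cases hcross : ∀ x ∈ S, gaussianPDFReal 0 w x ≤ symmGaussianPDFReal m v x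
  · rw [(happly hS hsymm).1, (happly hS hsymm).2]
    exact setLIntegral_mono' hS fun x hx => ENNReal.ofReal_le_ofReal (hcross x hx)
  push Not at hcross
  obtain ⟨r, hrS, hr⟩ := hcross
  have hcompl : gaussianReal m v Sᶜ ≤ gaussianReal 0 w Sᶜ := by
    have hcsymm : Neg.neg ⁻¹' Sᶜ = Sᶜ := by rw [preimage_compl, hsymm]
    rw [(happly hS.compl hcsymm).1, (happly hS.compl hcsymm).2]
    refine setLIntegral_mono' hS.compl fun x hx => ENNReal.ofReal_le_ofReal ?_
    have hrx : |r| ≤ |x| := sq_le_sq.1 (le_trans hrS (lt_of_not_ge (show ¬x ^ 2 ≤ c from hx)).le)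
    by_contra! hlt
    exact hr.not_ge (gaussianPDFReal_le_symmGaussianPDFReal_of_abs_le hv hw h0 hrx hlt.le)
  rwa [prob_compl_eq_one_sub hS, prob_compl_eq_one_sub hS,
    ENNReal.sub_le_sub_iff_left prob_le_one ENNReal.one_ne_top] at hcompl

lemma gaussianReal_zero_setOf_add_sq_le (m : ℝ) (v : ℝ≥0) (c : ℝ) :
    gaussianReal 0 v {x | (x + m) ^ 2 ≤ c} = gaussianReal m v {x | x ^ 2 ≤ c} := by
  have hmap : (gaussianReal 0 v).map (· + m) = gaussianReal m v := by
    rw [gaussianReal_map_add_const, zero_add]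
  rw [← hmap, Measure.map_apply (by fun_prop) (measurableSet_le (by fun_prop) measurable_const),
    preimage_ofPred_eq]

end OneDimensional

section Gaussian

open ProbabilityTheory

variable {d : ℕ}

/-- The Lebesgue density of the centered Gaussian on `ℝ^d` with covariance `a·Id`. -/
def gaussianCovPDF (d : ℕ) (a : ℝ) (x : Ed d) : ℝ :=
  (2 * π * a) ^ (-(d : ℝ) / 2) * exp (-‖x‖ ^ 2 / (2 * a))

lemma gaussianCov_eq_withDensity (d : ℕ) (a : ℝ) :
    gaussianCov d a = volume.withDensity fun x => ENNReal.ofReal (gaussianCovPDF d a x) := rfl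

lemma gaussPdf_eq_gaussianCovPDF_one (d : ℕ) : gaussPdf d = gaussianCovPDF d 1 := by
  ext x
  simp [gaussPdf, gaussianCovPDF]

@[fun_prop]
lemma measurable_gaussianCovPDF (d : ℕ) (a : ℝ) : Measurable (gaussianCovPDF d a) := by
  unfold gaussianCovPDF
  fun_prop

lemma gaussianCovPDF_pos {a : ℝ} (ha : 0 < a) (x : Ed d) : 0 < gaussianCovPDF d a x := by
  unfold gaussianCovPDF
  positivity

lemma gaussianCovPDF_eq_of_norm_eq (a : ℝ) {x y : Ed d} (hxy : ‖x‖ = ‖y‖) :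
    gaussianCovPDF d a x = gaussianCovPDF d a y := by
  rw [gaussianCovPDF, gaussianCovPDF, hxy]

lemma gaussianCovPDF_eq_prod (v : ℝ≥0) (x : Ed d) :
    gaussianCovPDF d v x = ∏ i, gaussianPDFReal 0 v (x i) := by
  simp only [gaussianPDFReal, sub_zero, Finset.prod_mul_distrib, Finset.prod_const,
    Finset.card_univ, Fintype.card_fin, ← exp_sum, ← Finset.sum_div, Finset.sum_neg_distrib,
    gaussianCovPDF, EuclideanSpace.norm_sq_eq, norm_eq_abs, sq_abs]
  rw [sqrt_eq_rpow, ← rpow_neg (by positivity), ← rpow_mul_natCast (by positivity)]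
  ring_nf

lemma exists_setOf_norm_sq_le_eq_setOf_le_gaussianCovPDF {a t : ℝ} (ha : 0 < a) (ht : 0 < t) :
    ∃ c, {x : Ed d | t ≤ gaussianCovPDF d a x} = {x | ‖x‖ ^ 2 ≤ c} := by
  have hK : 0 < (2 * π * a) ^ (-(d : ℝ) / 2) := by positivity
  refine ⟨-log (t / (2 * π * a) ^ (-(d : ℝ) / 2)) * (2 * a), ext fun x => ?_⟩
  rw [mem_ofPred_eq, mem_ofPred_eq, gaussianCovPDF, ← div_le_iff₀' hK,
    ← log_le_iff_le_exp (by positivity), neg_div (2 * a), le_neg,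
    div_le_iff₀ (by positivity)]

lemma measurePreserving_toLp_gaussianCov {v : ℝ≥0} (hv : v ≠ 0) :
    MeasurePreserving (WithLp.toLp 2) (Measure.pi fun _ : Fin d => gaussianReal 0 v)
      (gaussianCov d v) := by
  have hpi : (Measure.pi fun _ : Fin d => gaussianReal 0 v)
      = (volume : Measure (Fin d → ℝ)).withDensity
        fun x => ENNReal.ofReal (gaussianCovPDF d v (WithLp.toLp 2 x)) := by
    have hprob : IsProbabilityMeasure ((volume : Measure ℝ).withDensity (gaussianPDF 0 v)) :=
      gaussianReal_of_var_ne_zero 0 hv ▸ inferInstance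
    calc (Measure.pi fun _ : Fin d => gaussianReal 0 v)
        = Measure.pi fun _ => volume.withDensity (gaussianPDF 0 v) := by
          rw [gaussianReal_of_var_ne_zero 0 hv]
      _ = (Measure.pi fun _ => volume).withDensity fun x => ∏ i, gaussianPDF 0 v (x i) :=
          pi_withDensity_eq_withDensity_prod (f := fun _ => gaussianPDF 0 v)
            fun _ => measurable_gaussianPDF 0 v
      _ = volume.withDensity fun x => ENNReal.ofReal (gaussianCovPDF d v (WithLp.toLp 2 x)) := by
          simp only [gaussianCovPDF_eq_prod, gaussianPDF, volume_pi,
            ENNReal.ofReal_prod_of_nonneg fun _ _ => gaussianPDFReal_nonneg 0 v _]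
  rw [hpi, gaussianCov_eq_withDensity]
  exact measurePreserving_withDensity_comp (PiLp.volume_preserving_toLp (Fin d))
    (h := fun x => ENNReal.ofReal (gaussianCovPDF d v x)) (by fun_prop)

lemma isProbabilityMeasure_gaussianCov {v : ℝ≥0} (hv : v ≠ 0) :
    IsProbabilityMeasure (gaussianCov d v) :=
  (measurePreserving_toLp_gaussianCov hv).map_eq ▸
    Measure.isProbabilityMeasure_map (WithLp.measurable_toLp 2 _).aemeasurable

lemma volume_absolutelyContinuous_gaussianCov {a : ℝ} (ha : 0 < a) :
    (volume : Measure (Ed d)) ≪ gaussianCov d a :=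
  withDensity_absolutelyContinuous' (measurable_gaussianCovPDF d a).ennreal_ofReal.aemeasurable
    (ae_of_all _ fun x => (ENNReal.ofReal_pos.2 (gaussianCovPDF_pos ha x)).ne')

lemma measurePreserving_gaussianCov (a : ℝ) (e : Ed d ≃ₗᵢ[ℝ] Ed d) :
    MeasurePreserving e (gaussianCov d a) (gaussianCov d a) := by
  have hmp := measurePreserving_withDensity_comp e.measurePreserving
    (h := fun x => ENNReal.ofReal (gaussianCovPDF d a x)) (by fun_prop)
  simpa only [gaussianCovPDF_eq_of_norm_eq a (e.norm_map _), ← gaussianCov_eq_withDensity] using hmp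

lemma gaussianCov_setOf_norm_add_sq_le_congr (a : ℝ) {y z : Ed d} (hyz : ‖y‖ = ‖z‖) (c : ℝ) :
    gaussianCov d a {x | ‖x + y‖ ^ 2 ≤ c} = gaussianCov d a {x | ‖x + z‖ ^ 2 ≤ c} := by
  obtain ⟨e, rfl⟩ : ∃ e : Ed d ≃ₗᵢ[ℝ] Ed d, e y = z :=
    ⟨(ℝ ∙ (y - z))ᗮ.reflection, Submodule.reflection_sub hyz⟩
  rw [← (measurePreserving_gaussianCov a e).measure_preimage (s := {x | ‖x + e y‖ ^ 2 ≤ c})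
    (measurableSet_le (by fun_prop) measurable_const).nullMeasurableSet]
  simp only [preimage_ofPred_eq, ← map_add, e.norm_map]

lemma gaussianCov_setOf_norm_sq_le_mono_of_forall {v w : ℝ≥0} (hv : v ≠ 0) (hw : w ≠ 0)
    {y : Ed d} (hy : ∀ i, gaussianPDFReal 0 w 0 ≤ gaussianPDFReal 0 v (y i)) (c : ℝ) :
    gaussianCov d w {x | ‖x‖ ^ 2 ≤ c} ≤ gaussianCov d v {x | ‖x + y‖ ^ 2 ≤ c} := by
  have hcoord (i : Fin d) (c : ℝ) :
      gaussianReal 0 w {x | x ^ 2 ≤ c} ≤ gaussianReal 0 v {x | (x + y i) ^ 2 ≤ c} := by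
    rw [gaussianReal_zero_setOf_add_sq_le]
    refine gaussianReal_setOf_sq_le_mono hv hw ?_ c
    simpa [gaussianPDFReal] using hy i
  rw [← (measurePreserving_toLp_gaussianCov hw).measure_preimage
      (measurableSet_le (by fun_prop) measurable_const).nullMeasurableSet,
    ← (measurePreserving_toLp_gaussianCov hv).measure_preimage
      (measurableSet_le (by fun_prop) measurable_const).nullMeasurableSet]
  simpa [EuclideanSpace.norm_sq_eq] using
    pi_setOf_sum_le_mono (fun _ => by fun_prop) (fun _ => by fun_prop) hcoord c

lemma gaussianCov_setOf_norm_sq_le_mono {v w : ℝ≥0} (hv : v ≠ 0) (hw : w ≠ 0) {y : Ed d}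
    (hy : gaussianCovPDF d w 0 ≤ gaussianCovPDF d v y) (c : ℝ) :
    gaussianCov d w {x | ‖x‖ ^ 2 ≤ c} ≤ gaussianCov d v {x | ‖x + y‖ ^ 2 ≤ c} := by
  -- Once `y` is rotated onto the diagonal, the hypothesis splits into equal coordinate conditions.
  set z : Ed d := WithLp.toLp 2 fun _ => ‖y‖ / √d with hz_def
  have hyz : ‖y‖ = ‖z‖ := by
    rcases eq_or_ne d 0 with rfl | hd
    · simp [Subsingleton.elim y z]
    · rw [← sq_eq_sq₀ (norm_nonneg y) (norm_nonneg z), EuclideanSpace.norm_sq_eq z]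
      simp only [hz_def, norm_div, norm_eq_abs, div_pow, sq_abs, Nat.cast_nonneg, sq_sqrt,
        Finset.sum_const, Finset.card_univ, Fintype.card_fin, nsmul_eq_mul]
      field_simp
  rw [gaussianCov_setOf_norm_add_sq_le_congr v hyz]
  refine gaussianCov_setOf_norm_sq_le_mono_of_forall hv hw (fun i => ?_) c
  rw [gaussianCovPDF_eq_of_norm_eq v hyz, gaussianCovPDF_eq_prod, gaussianCovPDF_eq_prod] at hy
  simp only [PiLp.zero_apply, hz_def, Finset.prod_const, Finset.card_univ, Fintype.card_fin] at hy
  exact (pow_le_pow_iff_left₀ (gaussianPDFReal_nonneg 0 w 0) (gaussianPDFReal_nonneg 0 v _)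
    i.pos.ne').1 hy

lemma gaussPdf_zero_le_gaussianCovPDF {a R : ℝ} (ha : 0 < a)
    (hR : √a * exp (R ^ 2 / (2 * a)) ≤ 1) {y : Ed d} (hy : ‖y‖ ≤ R) :
    gaussPdf d 0 ≤ gaussianCovPDF d a y := by
  have hE : exp (‖y‖ ^ 2 / (2 * a)) ≤ (√a)⁻¹ ^ d := by
    rcases eq_or_ne d 0 with rfl | hd
    · simp [Subsingleton.elim y 0]
    have hle : exp (‖y‖ ^ 2 / (2 * a)) ≤ (√a)⁻¹ := by
      rw [← one_div, le_div_iff₀' (sqrt_pos.2 ha)]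
      exact le_trans (by gcongr) hR
    exact hle.trans (le_self_pow₀ ((one_le_exp (by positivity)).trans hle) hd)
  have hpow : (2 * π * a) ^ (-(d : ℝ) / 2) = (2 * π) ^ (-(d : ℝ) / 2) * (√a)⁻¹ ^ d := by
    rw [mul_rpow (by positivity) ha.le, sqrt_eq_rpow, ← rpow_neg ha.le, ← rpow_mul_natCast ha.le]
    ring_nf
  calc gaussPdf d 0 = (2 * π) ^ (-(d : ℝ) / 2) * 1 := by simp [gaussPdf]
    _ ≤ (2 * π) ^ (-(d : ℝ) / 2) * ((√a)⁻¹ ^ d * (exp (‖y‖ ^ 2 / (2 * a)))⁻¹) := by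
        gcongr
        rwa [← div_eq_mul_inv, one_le_div (exp_pos _)]
    _ = gaussianCovPDF d a y := by
        rw [gaussianCovPDF, hpow, ← exp_neg, ← neg_div (2 * a), mul_assoc]

end Gaussian

lemma ae_mem_msupport {d : ℕ} (ν : Measure (Ed d)) : ∀ᵐ y ∂ν, y ∈ msupport ν := by
  filter_upwards [Measure.support_mem_ae (μ := ν)] with y hy U hU hyU
  exact ((Measure.mem_support_iff_forall y).1 hy U (hU.mem_nhds hyU)).ne'

lemma ae_gaussianCovPDF_one_zero_le {d : ℕ} {a R : ℝ} (ha : 0 < a)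
    (hR : √a * exp (R ^ 2 / (2 * a)) ≤ 1) {ν : Measure (Ed d)}
    (hν : msupport ν ⊆ Metric.closedBall 0 R) :
    ∀ᵐ y ∂ν, gaussianCovPDF d 1 0 ≤ gaussianCovPDF d a y := by
  filter_upwards [ae_mem_msupport ν] with y hy
  rw [← gaussPdf_eq_gaussianCovPDF_one]
  exact gaussPdf_zero_le_gaussianCovPDF ha hR (mem_closedBall_zero_iff.1 (hν hy))

theorem gaussian_majorized_mixture_general (d : ℕ) {a b : ℝ} (ha : 0 < a) (hb : 0 < b)
    (ν : Measure (Ed d)) [IsProbabilityMeasure ν]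
    (hν : ∀ᵐ y ∂ν, gaussianCovPDF d b 0 ≤ gaussianCovPDF d a y) (p : Ed d → ℝ)
    (hp : mconv (gaussianCov d a) ν = volume.withDensity fun x => ENNReal.ofReal (p x)) (t : ℝ) :
    ∫⁻ l in Ioi t, distFun (gaussianCovPDF d b) l ≤ ∫⁻ l in Ioi t, distFun p l := by
  lift a to ℝ≥0 using ha.le
  lift b to ℝ≥0 using hb.le
  have hγa := isProbabilityMeasure_gaussianCov (d := d) (NNReal.coe_pos.1 ha).ne'
  have hγb := isProbabilityMeasure_gaussianCov (d := d) (NNReal.coe_pos.1 hb).ne'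
  have hμ : IsProbabilityMeasure (mconv (gaussianCov d a) ν) :=
    inferInstanceAs (IsProbabilityMeasure ((gaussianCov d a).conv ν))
  have hfin : IsFiniteMeasure
      (volume.withDensity fun x => ENNReal.ofReal (gaussianCovPDF d b x)) :=
    inferInstanceAs (IsFiniteMeasure (gaussianCov d b))
  refine lintegral_meas_le_mono_of_forall_withDensity_le (by fun_prop) ?_ (fun s hs => ?_) t
  · rw [← hp]
    exact absolutelyContinuous_conv_of_absolutelyContinuous
      (volume_absolutelyContinuous_gaussianCov ha)
  rw [← hp, ← gaussianCov_eq_withDensity]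
  rcases hs.eq_or_lt with rfl | hs
  · simp [(gaussianCovPDF_pos hb _).le]
  obtain ⟨c, hc⟩ := exists_setOf_norm_sq_le_eq_setOf_le_gaussianCovPDF (d := d) hb hs
  rw [hc]
  refine le_conv_apply_of_ae_le (measurableSet_le (by fun_prop) measurable_const) ?_
  filter_upwards [hν] with y hy
  exact gaussianCov_setOf_norm_sq_le_mono (NNReal.coe_pos.1 ha).ne' (NNReal.coe_pos.1 hb).ne' hy c

/-- If `μ = γ_d^a ⋆ ν` with `ν` supported in a ball of radius `R`, `a > 0`,
and `√a·e^{R²/(2a)} ≤ 1`, then the standard Gaussian is majorized by `μ`. -/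
theorem gaussian_majorized_mixture
    (d : ℕ) (a R : ℝ) (ha : 0 < a) (ν : Measure (Ed d)) [IsProbabilityMeasure ν]
    (hν : msupport ν ⊆ Metric.closedBall 0 R)
    (μ : Measure (Ed d)) (hμ : μ = mconv (gaussianCov d a) ν)
    (p : Ed d → ℝ)
    (hp : μ = (volume : Measure (Ed d)).withDensity fun x => ENNReal.ofReal (p x))
    (hlip : Real.sqrt a * Real.exp (R ^ 2 / (2 * a)) ≤ 1) :
    ∀ t : ℝ,
      ∫⁻ l in Set.Ioi t, distFun (gaussPdf d) l ≤ ∫⁻ l in Set.Ioi t, distFun p l := by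
  rw [gaussPdf_eq_gaussianCovPDF_one]
  exact gaussian_majorized_mixture_general d ha one_pos ν
    (ae_gaussianCovPDF_one_zero_le ha hlip hν) p (hμ ▸ hp)
end
end

section
/- Let η, η′ be probability measures on ℝ^d, and let (η_k) and (η′_k) be sequences of probability measures converging in distribution to η and η′ respectively. Suppose that for every k there exists an L_k-Lipschitz map φ_k : ℝ^d → ℝ^d with (φ_k)_*η_k = η′_k, and that L := limsup_{k→∞} L_k < ∞. Then there exists an L-Lipschitz map φ : ℝ^d → ℝ^d with φ_*η = η′. -/
open MeasureTheory Real Set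
open scoped ENNReal NNReal

noncomputable section

/-!
Fix points `x` and `y`. For large radii `R` and `R'` the sets `ball x R` and `φ_k ⁻¹' ball y R'`
eventually both have `η_k`-mass more than `1 / 2`, so they meet, which confines `φ_k x` to a fixed
closed ball around `y`. Along an ultrafilter `φ_k` therefore converges pointwise to some `φ`, and
taking the limsup in `dist (φ_k x) (φ_k x') ≤ L_k * dist x x'` shows that `φ` is `L`-Lipschitz.

By equicontinuity `φ_k x' → φ x` jointly as `k → ∞` and `x' → x`. For bounded continuous `g`, every
point thus has a neighbourhood on which `g ∘ φ_k - g ∘ φ` is uniformly small for large `k`. Finitely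
many of these neighbourhoods carry most of the mass of `η`, hence of `η_k`, so
`∫ g ∘ φ_k dη_k - ∫ g ∘ φ dη_k → 0`, and `(φ_k)_* η_k → φ_* η` weakly.
-/

open Filter Topology

section EventuallyLarge

variable {ι X : Type*} {l : Filter ι} [TopologicalSpace X] [HasOuterApproxClosed X]
  [MeasurableSpace X] [OpensMeasurableSpace X] {μ : ProbabilityMeasure X}
  {μs : ι → ProbabilityMeasure X} {c : ℝ≥0∞}

lemma exists_eventually_lt_measure_of_directed {κ : Type*} [Countable κ]
    (hμ : Tendsto μs l (𝓝 μ)) (hc : c < 1) {V : κ → Set X} (hVdir : Directed (· ⊆ ·) V)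
    (hVopen : ∀ j, IsOpen (V j)) (hV : ⋃ j, V j = univ) :
    ∃ j, ∀ᶠ i in l, c < (μs i : Measure X) (V j) := by
  have hsup : c < ⨆ j, (μ : Measure X) (V j) := by
    rwa [← hVdir.measure_iUnion, hV, measure_univ]
  obtain ⟨j, hj⟩ := lt_iSup_iff.1 hsup
  exact ⟨j, eventually_lt_of_lt_liminf <|
    hj.trans_le (ProbabilityMeasure.le_liminf_measure_open_of_tendsto hμ (hVopen j))⟩

lemma exists_isOpen_eventually_lt_measure_and_forall [LindelofSpace X]
    (hμ : Tendsto μs l (𝓝 μ)) (hc : c < 1) {p : ι → X → Prop}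
    (hp : ∀ x, ∀ᶠ q : ι × X in l ×ˢ 𝓝 x, p q.1 q.2) :
    ∃ V, IsOpen V ∧ ∀ᶠ i in l, c < (μs i : Measure X) V ∧ ∀ x ∈ V, p i x := by
  have hcover : ∀ x, ∃ U, (x ∈ U ∧ IsOpen U) ∧ ∀ᶠ i in l, ∀ y ∈ U, p i y := fun x ↦ by
    obtain ⟨⟨A, U⟩, ⟨hA, hU⟩, hAU⟩ :=
      (l.basis_sets.prod (nhds_basis_opens x)).eventually_iff.1 (hp x)
    exact ⟨U, hU, mem_of_superset hA fun i hi y hy ↦ hAU (x := (i, y)) ⟨hi, hy⟩⟩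
  choose U hU hUp using hcover
  obtain ⟨t, ht, htU⟩ := countable_cover_nhds fun x ↦ (hU x).2.mem_nhds (hU x).1
  have := ht.to_subtype
  let V (s : Finset t) : Set X := ⋃ x ∈ s, U x
  have hVopen (s : Finset t) : IsOpen (V s) := isOpen_biUnion fun x _ ↦ (hU x).2
  have hVmono : Monotone V := fun _ _ h ↦ biUnion_subset_biUnion_left h
  have hV : ⋃ s, V s = univ := by
    rw [← iUnion_eq_iUnion_finset, ← biUnion_eq_iUnion t fun x _ ↦ U x, htU]
  obtain ⟨s, hs⟩ := exists_eventually_lt_measure_of_directed hμ hc hVmono.directed_le hVopen hV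
  refine ⟨V s, hVopen s, hs.and ?_⟩
  filter_upwards [(eventually_all_finset s).2 fun x _ ↦ hUp x] with i hi y hy
  obtain ⟨x, hx, hyx⟩ := mem_iUnion₂.1 hy
  exact hi x hx y hyx

end EventuallyLarge

section ContinuousMapping

variable {ι X : Type*} {l : Filter ι} [MeasurableSpace X]

lemma norm_integral_le_add_mul_measureReal_compl {E : Type*} [NormedAddCommGroup E]
    [NormedSpace ℝ E] {μ : Measure X} [IsProbabilityMeasure μ] {h : X → E} {M ε : ℝ} (hε : 0 ≤ ε)
    (hM : ∀ x, ‖h x‖ ≤ M) {V : Set X} (hV : MeasurableSet V) (hVε : ∀ x ∈ V, ‖h x‖ ≤ ε) :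
    ‖∫ x, h x ∂μ‖ ≤ ε + M * μ.real Vᶜ := by
  have hind : Integrable (Vᶜ.indicator fun _ ↦ M) μ := (integrable_const M).indicator hV.compl
  calc ‖∫ x, h x ∂μ‖ ≤ ∫ x, (ε + Vᶜ.indicator (fun _ ↦ M) x) ∂μ := by
        refine norm_integral_le_of_norm_le ((integrable_const ε).add hind) (.of_forall fun x ↦ ?_)
        by_cases hx : x ∈ V
        · simpa [hx] using hVε x hx
        · simpa [hx] using (hM x).trans (le_add_of_nonneg_left hε)
    _ = ε + M * μ.real Vᶜ := by
        rw [integral_add (integrable_const ε) hind, integral_indicator_const _ hV.compl]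
        simp [mul_comm]

variable [TopologicalSpace X] [HasOuterApproxClosed X] [OpensMeasurableSpace X] [LindelofSpace X]
  {μ : ProbabilityMeasure X} {μs : ι → ProbabilityMeasure X}

lemma tendsto_integral_zero_of_tendsto_prod_nhds {E : Type*} [NormedAddCommGroup E]
    [NormedSpace ℝ E] (hμ : Tendsto μs l (𝓝 μ)) {h : ι → X → E} {M : ℝ}
    (hM : ∀ i x, ‖h i x‖ ≤ M)
    (hh : ∀ x, Tendsto (fun q : ι × X ↦ h q.1 q.2) (l ×ˢ 𝓝 x) (𝓝 0)) :
    Tendsto (fun i ↦ ∫ x, h i x ∂(μs i : Measure X)) l (𝓝 0) := by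
  refine Metric.tendsto_nhds.2 fun ε hε ↦ ?_
  obtain ⟨δ, hδ, hMδ⟩ : ∃ δ > 0, M * δ < ε / 2 := exists_pos_mul_lt (half_pos hε) M
  have hsmall (x : X) : ∀ᶠ q : ι × X in l ×ˢ 𝓝 x, ‖h q.1 q.2‖ ≤ ε / 2 :=
    (hh x).norm.eventually_le_const (by simpa using hε)
  obtain ⟨V, hVopen, hV⟩ := exists_isOpen_eventually_lt_measure_and_forall hμ
    (c := 1 - ENNReal.ofReal δ) (p := fun i x ↦ ‖h i x‖ ≤ ε / 2)
    (ENNReal.sub_lt_self (by simp) (by simp) (by simpa)) hsmall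
  filter_upwards [hV] with i ⟨hiV, hiε⟩
  have hcompl : (μs i : Measure X).real Vᶜ ≤ δ := by
    refine ENNReal.toReal_le_of_le_ofReal hδ.le ?_
    rw [prob_compl_eq_one_sub hVopen.measurableSet]
    exact tsub_le_iff_tsub_le.1 hiV.le
  have hM0 : 0 ≤ M := (norm_nonneg _).trans (hM i (μs i).nonempty.some)
  calc dist (∫ x, h i x ∂(μs i : Measure X)) 0
      = ‖∫ x, h i x ∂(μs i : Measure X)‖ := dist_zero_right _
    _ ≤ ε / 2 + M * (μs i : Measure X).real Vᶜ :=
        norm_integral_le_add_mul_measureReal_compl (half_pos hε).le (hM i)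
          hVopen.measurableSet hiε
    _ ≤ ε / 2 + M * δ := by gcongr
    _ < ε := by linarith

lemma tendsto_map_of_tendsto_of_tendsto_prod_nhds {Y : Type*} [TopologicalSpace Y]
    [MeasurableSpace Y] [BorelSpace Y] (hμ : Tendsto μs l (𝓝 μ)) {F : ι → X → Y} {f : X → Y}
    (hF : ∀ i, Measurable (F i)) (hf : Continuous f)
    (hFf : ∀ x, Tendsto (fun q : ι × X ↦ F q.1 q.2) (l ×ˢ 𝓝 x) (𝓝 (f x))) :
    Tendsto (fun i ↦ (μs i).map (hF i).aemeasurable) l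
      (𝓝 (μ.map hf.measurable.aemeasurable)) := by
  refine ProbabilityMeasure.tendsto_iff_forall_integral_tendsto.2 fun g ↦ ?_
  let gf : BoundedContinuousFunction X ℝ := g.compContinuous ⟨f, hf⟩
  have hgf : Tendsto (fun i ↦ ∫ x, g (f x) ∂(μs i : Measure X)) l
      (𝓝 (∫ x, g (f x) ∂(μ : Measure X))) :=
    ProbabilityMeasure.tendsto_iff_forall_integral_tendsto.1 hμ gf
  have hdiff : Tendsto (fun i ↦ ∫ x, (g (F i x) - g (f x)) ∂(μs i : Measure X)) l (𝓝 0) := by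
    refine tendsto_integral_zero_of_tendsto_prod_nhds hμ (M := 2 * ‖g‖)
      (fun i x ↦ (dist_eq_norm _ _).symm.trans_le (g.dist_le_two_norm _ _)) fun x ↦ ?_
    rw [← sub_self (g (f x))]
    exact ((g.continuous.tendsto (f x)).comp (hFf x)).sub
      ((gf.continuous.tendsto x).comp tendsto_snd)
  have hsum : Tendsto (fun i ↦ ∫ x, g (F i x) ∂(μs i : Measure X)) l
      (𝓝 (∫ x, g (f x) ∂(μ : Measure X))) := by
    rw [← zero_add (∫ x, g (f x) ∂(μ : Measure X))]
    refine (hdiff.add hgf).congr fun i ↦ ?_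
    have hgF : Integrable (fun x ↦ g (F i x)) (μs i : Measure X) :=
      .of_bound (g.continuous.measurable.comp (hF i)).aestronglyMeasurable ‖g‖
        (.of_forall fun x ↦ g.norm_coe_le_norm _)
    have hgf_int : Integrable (fun x ↦ g (f x)) (μs i : Measure X) := gf.integrable _
    rw [integral_sub hgF hgf_int, sub_add_cancel]
  have hmeas (ρ : Measure Y) : AEStronglyMeasurable g ρ :=
    g.continuous.measurable.aestronglyMeasurable
  simpa only [ProbabilityMeasure.toMeasure_map, integral_map (hF _).aemeasurable (hmeas _),
    integral_map hf.measurable.aemeasurable (hmeas _)] using hsum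

end ContinuousMapping

section LipschitzFamilies

variable {ι X Y : Type*} {l : Filter ι} [PseudoMetricSpace X] [PseudoMetricSpace Y]
  {F : ι → X → Y} {f : X → Y} {K : ℝ≥0}

lemma eventually_lipschitzWith_of_limsup_lt {L : ι → ℝ≥0} (hF : ∀ i, LipschitzWith (L i) (F i))
    (hL : limsup (fun i ↦ (L i : ℝ≥0∞)) l < K) : ∀ᶠ i in l, LipschitzWith K (F i) := by
  filter_upwards [eventually_lt_of_limsup_lt hL] with i hi
  exact (hF i).weaken (ENNReal.coe_le_coe.1 hi.le)

lemma lipschitzWith_of_tendsto_of_limsup_le [l.NeBot] {L : ι → ℝ≥0}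
    (hF : ∀ i, LipschitzWith (L i) (F i)) (hL : limsup (fun i ↦ (L i : ℝ≥0∞)) l ≤ K)
    (hlim : ∀ x, Tendsto (F · x) l (𝓝 (f x))) : LipschitzWith K f := fun x y ↦
  calc edist (f x) (f y) = limsup (fun i ↦ edist (F i x) (F i y)) l :=
        ((hlim x).edist (hlim y)).limsup_eq.symm
    _ ≤ limsup (fun i ↦ L i * edist x y) l :=
        limsup_le_limsup (.of_forall fun i ↦ hF i x y)
    _ ≤ K * edist x y := by
        rw [ENNReal.limsup_mul_const_of_ne_top (edist_ne_top x y), mul_comm]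
        gcongr

lemma tendsto_prod_nhds_of_eventually_lipschitzWith (hF : ∀ᶠ i in l, LipschitzWith K (F i))
    {x : X} {y : Y} (hx : Tendsto (F · x) l (𝓝 y)) :
    Tendsto (fun q : ι × X ↦ F q.1 q.2) (l ×ˢ 𝓝 x) (𝓝 y) := by
  have hbound : ∀ᶠ q : ι × X in l ×ˢ 𝓝 x,
      dist (F q.1 q.2) y ≤ K * dist q.2 x + dist (F q.1 x) y := by
    filter_upwards [tendsto_fst.eventually hF] with q hq
    exact (dist_triangle _ (F q.1 x) _).trans (by gcongr; exact hq.dist_le_mul _ _)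
  refine tendsto_iff_dist_tendsto_zero.2
    (squeeze_zero' (.of_forall fun _ ↦ dist_nonneg) hbound ?_)
  have hdist : Tendsto (fun q : ι × X ↦ dist q.2 x) (l ×ˢ 𝓝 x) (𝓝 0) :=
    (tendsto_iff_dist_tendsto_zero.1 tendsto_id).comp tendsto_snd
  simpa using (hdist.const_mul (K : ℝ)).add
    ((tendsto_iff_dist_tendsto_zero.1 hx).comp tendsto_fst)

variable [MeasurableSpace X] [OpensMeasurableSpace X] [MeasurableSpace Y] [BorelSpace Y]
  {μ : ProbabilityMeasure X} {μs : ι → ProbabilityMeasure X}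
  {ν : ProbabilityMeasure Y} {νs : ι → ProbabilityMeasure Y}

lemma exists_eventually_lt_measure_ball (hμ : Tendsto μs l (𝓝 μ)) (x : X) {c : ℝ≥0∞}
    (hc : c < 1) : ∃ r : ℝ, ∀ᶠ i in l, c < (μs i : Measure X) (Metric.ball x r) := by
  have hmono : Monotone fun n : ℕ ↦ Metric.ball x (n : ℝ) := fun _ _ h ↦
    Metric.ball_subset_ball (by exact_mod_cast h)
  obtain ⟨n, hn⟩ := exists_eventually_lt_measure_of_directed hμ hc hmono.directed_le
    (fun _ ↦ Metric.isOpen_ball) (Metric.iUnion_ball_nat x)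
  exact ⟨n, hn⟩

lemma exists_eventually_mem_closedBall_of_tendsto_map (hμ : Tendsto μs l (𝓝 μ))
    (hν : Tendsto νs l (𝓝 ν)) (hF : ∀ᶠ i in l, LipschitzWith K (F i))
    (hmap : ∀ i, (μs i : Measure X).map (F i) = νs i) (x : X) (y : Y) :
    ∃ r : ℝ, ∀ᶠ i in l, F i x ∈ Metric.closedBall y r := by
  obtain ⟨R, hR⟩ := exists_eventually_lt_measure_ball hμ x ENNReal.one_half_lt_one
  obtain ⟨R', hR'⟩ := exists_eventually_lt_measure_ball hν y ENNReal.one_half_lt_one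
  refine ⟨K * R + R', ?_⟩
  filter_upwards [hR, hR', hF] with i hi hi' hFi
  rw [← hmap i, Measure.map_apply hFi.continuous.measurable measurableSet_ball] at hi'
  -- Two sets of mass larger than `1 / 2` meet.
  obtain ⟨z, hzx, hzy⟩ : (Metric.ball x R ∩ F i ⁻¹' Metric.ball y R').Nonempty := by
    refine nonempty_inter_of_measure_lt_add' (μs i : Measure X) measurableSet_ball
      (subset_univ _) (subset_univ _) ?_
    rw [measure_univ, ← ENNReal.inv_two_add_inv_two]
    exact ENNReal.add_lt_add hi hi'
  calc dist (F i x) y ≤ dist (F i x) (F i z) + dist (F i z) y := dist_triangle _ _ _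
    _ ≤ K * dist x z + dist (F i z) y := by gcongr; exact hFi.dist_le_mul x z
    _ ≤ K * R + R' := by
        gcongr
        · exact (Metric.mem_ball'.1 hzx).le
        · exact (Metric.mem_ball.1 hzy).le

end LipschitzFamilies

theorem lipschitz_transport_limit_general {ι X Y : Type*} {l : Filter ι} [l.NeBot]
    [PseudoMetricSpace X] [LindelofSpace X] [MeasurableSpace X] [OpensMeasurableSpace X]
    [PseudoMetricSpace Y] [ProperSpace Y] [MeasurableSpace Y] [BorelSpace Y]
    {μ : ProbabilityMeasure X} {μs : ι → ProbabilityMeasure X}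
    {ν : ProbabilityMeasure Y} {νs : ι → ProbabilityMeasure Y}
    (hμ : Tendsto μs l (𝓝 μ)) (hν : Tendsto νs l (𝓝 ν)) {F : ι → X → Y} {L : ι → ℝ≥0} {K : ℝ≥0}
    (hF : ∀ i, LipschitzWith (L i) (F i)) (hmap : ∀ i, (μs i : Measure X).map (F i) = νs i)
    (hL : limsup (fun i ↦ (L i : ℝ≥0∞)) l ≤ K) :
    ∃ f : X → Y, LipschitzWith K f ∧ (μ : Measure X).map f = ν := by
  let u : Ultrafilter ι := .of l
  have hu : ↑u ≤ l := Ultrafilter.of_le l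
  have hF' : ∀ᶠ i in l, LipschitzWith (K + 1) (F i) :=
    eventually_lipschitzWith_of_limsup_lt hF (hL.trans_lt (by exact_mod_cast lt_add_one K))
  have hconv (x : X) : ∃ y, Tendsto (F · x) u (𝓝 y) := by
    obtain ⟨r, hr⟩ :=
      exists_eventually_mem_closedBall_of_tendsto_map hμ hν hF' hmap x ν.nonempty.some
    obtain ⟨y, -, hy⟩ :=
      (isCompact_closedBall _ r).ultrafilter_le_nhds' (u.map (F · x)) (hu hr)
    exact ⟨y, hy⟩
  choose f hf using hconv
  have hfK : LipschitzWith K f :=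
    lipschitzWith_of_tendsto_of_limsup_le hF ((limsup_le_limsup_of_le hu).trans hL) hf
  have hmap' : (fun i ↦ (μs i).map (hF i).continuous.measurable.aemeasurable) = νs :=
    funext fun i ↦ ProbabilityMeasure.toMeasure_injective (hmap i)
  have hpush := tendsto_map_of_tendsto_of_tendsto_prod_nhds (hμ.mono_left hu)
    (fun i ↦ (hF i).continuous.measurable) hfK.continuous
    fun x ↦ tendsto_prod_nhds_of_eventually_lipschitzWith (hu hF') (hf x)
  rw [hmap'] at hpush
  have hfν := tendsto_nhds_unique hpush (hν.mono_left hu)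
  exact ⟨f, hfK, congrArg ProbabilityMeasure.toMeasure hfν⟩

/-- Stability of Lipschitz transport maps under weak convergence:
if `φ_k : (η_k → η'_k)` are `L_k`-Lipschitz transport maps, `η_k → η`, `η'_k → η'` in
distribution and `L = limsup L_k < ∞`, then there is an `L`-Lipschitz map pushing
`η` forward to `η'`. -/
theorem lipschitz_transport_limit
    (d : ℕ) (η η' : Measure (Ed d)) [IsProbabilityMeasure η] [IsProbabilityMeasure η']
    (ηk η'k : ℕ → Measure (Ed d))
    (hprob : ∀ k, IsProbabilityMeasure (ηk k)) (hprob' : ∀ k, IsProbabilityMeasure (η'k k))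
    (hconv : ∀ f : BoundedContinuousFunction (Ed d) ℝ,
      Filter.Tendsto (fun k => ∫ x, f x ∂(ηk k)) Filter.atTop (nhds (∫ x, f x ∂η)))
    (hconv' : ∀ f : BoundedContinuousFunction (Ed d) ℝ,
      Filter.Tendsto (fun k => ∫ x, f x ∂(η'k k)) Filter.atTop (nhds (∫ x, f x ∂η')))
    (L : ℕ → ℝ≥0) (φk : ℕ → Ed d → Ed d)
    (hφ : ∀ k, LipschitzWith (L k) (φk k) ∧ Measure.map (φk k) (ηk k) = η'k k)
    (Llim : ℝ≥0)
    (hL : Filter.limsup (fun k => (L k : ℝ≥0∞)) Filter.atTop = (Llim : ℝ≥0∞)) :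
    ∃ φ : Ed d → Ed d, LipschitzWith Llim φ ∧ Measure.map φ η = η' :=
  lipschitz_transport_limit_general (μ := ⟨η, ‹_›⟩) (μs := fun k ↦ ⟨ηk k, hprob k⟩)
    (ν := ⟨η', ‹_›⟩) (νs := fun k ↦ ⟨η'k k, hprob' k⟩)
    (ProbabilityMeasure.tendsto_iff_forall_integral_tendsto.2 hconv)
    (ProbabilityMeasure.tendsto_iff_forall_integral_tendsto.2 hconv')
    (fun k ↦ (hφ k).1) (fun k ↦ (hφ k).2) hL.le
end
end

section
/- Let ν be a probability measure on ℝ^d whose support is contained in a ball of radius R, let μ = γ_d ⋆ ν, and let f = dμ/dγ_d be its density with respect to the standard Gaussian. Then for every t ≥ 0 and every x ∈ ℝ^d, ∇² log Q_t f(x) ⪯ e^{−2t}·R²·Id_d. -/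
open MeasureTheory Real Set
open scoped ENNReal NNReal

noncomputable section

/-!
By Cameron–Martin, `f` is the mixture over `z ∼ ν` of the functions `exp (⟪z, x⟫ - ‖z‖² / 2)`, and
`Q_t` only replaces `ν` by its image under `z ↦ e^{-t} z`. Along a line, the logarithm of such a
mixture is, up to a constant, the cumulant generating function of a tilted copy of the mixing
measure. Its Hessian is therefore the covariance of that copy, which lives in the same ball as the
mixing measure.

The equation for `f` pins it down only up to null sets, and not even that if `f` is not measurable.
Still, unless `Q_t f` vanishes identically, the smooth function above is at each point a cluster
value of `log (Q_t f)`. Where the derivatives of `log (Q_t f)` exist, this allows comparing them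
with those of the smooth function; where they do not, `fderiv` takes the value `0`.
-/

open Filter
open scoped Topology RealInnerProductSpace ProbabilityTheory

section LineDerivative

theorem deriv_eq_of_frequently_eq {f g : ℝ → ℝ} {f' g' a : ℝ} (hf : HasDerivAt f f' a)
    (hg : HasDerivAt g g' a) (h : ∃ᶠ s in 𝓝[≠] a, f s = g s) : f' = g' := by
  have haccPt : AccPt a (𝓟 {s | f s = g s}) := accPt_iff_frequently_nhdsNE.2 h
  have hfga : f a = g a := by
    have hmaps : MapsTo (fun s => f s - g s) {s | f s = g s} {0} := fun s hs => sub_eq_zero.2 hs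
    have := (hf.continuousAt.sub hg.continuousAt).continuousWithinAt.mem_closure
      (mem_closure_iff_clusterPt.2 haccPt.clusterPt) hmaps
    simpa [sub_eq_zero] using this
  exact (uniqueDiffWithinAt_iff_accPt.2 haccPt).eq_deriv _ hf.hasDerivWithinAt
    (hg.hasDerivWithinAt.congr (fun _ hs => hs) hfga)

theorem lineDeriv_add_smul {E : Type*} [NormedAddCommGroup E] [NormedSpace ℝ E] (f : E → ℝ)
    (x w : E) (s : ℝ) : lineDeriv ℝ f (x + s • w) w = deriv (fun u => f (x + u • w)) s := by
  rw [← zero_add s, ← deriv_comp_add_const, zero_add]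
  simp only [lineDeriv, add_smul, add_assoc, add_comm]

theorem hasFDerivAt_of_mapClusterPt {E F : Type*} [NormedAddCommGroup E] [NormedSpace ℝ E]
    [NormedAddCommGroup F] [NormedSpace ℝ F] {f g : E → F} {D : E →L[ℝ] F} {x : E}
    (hg : ∀ y, MapClusterPt (g y) (𝓝 y) f) (hf : HasFDerivAt f D x) : HasFDerivAt g D x := by
  have hfgx : f x = g x := by
    obtain ⟨U, hU, hfU⟩ := mapClusterPt_iff_ultrafilter.1 (hg x)
    exact tendsto_nhds_unique (hf.continuousAt.tendsto.mono_left hU) hfU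
  rw [hasFDerivAt_iff_isLittleO, Asymptotics.isLittleO_iff] at hf ⊢
  intro ε hε
  filter_upwards [eventually_eventually_nhds.2 (hf hε)] with y hy
  obtain ⟨U, hU, hfU⟩ := mapClusterPt_iff_ultrafilter.1 (hg y)
  have hid : Tendsto (fun u => u - x) U (𝓝 (y - x)) := Tendsto.sub_const hU x
  rw [← hfgx]
  exact le_of_tendsto_of_tendsto
    ((hfU.sub_const _).sub ((D.continuous.tendsto _).comp hid)).norm (hid.norm.const_mul ε)
    (hU hy)

theorem hessQF_eq_or_eq_zero_of_mapClusterPt {d : ℕ} {f g : Ed d → ℝ} {x w : Ed d} {c : ℝ}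
    (hg : ∀ y, MapClusterPt (g y) (𝓝 y) f)
    (hc : HasLineDerivAt ℝ (fun y => lineDeriv ℝ g y w) c x w) :
    hessQF f x w = c ∨ hessQF f x w = 0 := by
  by_cases hdiff : DifferentiableAt ℝ (fun y => fderiv ℝ f y w) x
  swap
  · exact Or.inr (by rw [hessQF, fderiv_zero_of_not_differentiableAt hdiff, zero_apply])
  have hline : HasDerivAt (fun s : ℝ => fderiv ℝ f (x + s • w) w) (hessQF f x w) 0 :=
    hdiff.hasFDerivAt.hasLineDerivAt w
  have hpointwise (y : Ed d) : fderiv ℝ f y w = lineDeriv ℝ g y w ∨ fderiv ℝ f y w = 0 := by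
    by_cases hfy : DifferentiableAt ℝ f y
    · have hgy := (hasFDerivAt_of_mapClusterPt hg hfy.hasFDerivAt).hasLineDerivAt w
      exact Or.inl hgy.lineDeriv.symm
    · exact Or.inr (by rw [fderiv_zero_of_not_differentiableAt hfy, zero_apply])
  -- One of the two alternatives recurs arbitrarily close to `x` along the line, and its
  -- values there determine the derivative at `x`.
  have hfrequently : ∃ᶠ s : ℝ in 𝓝[≠] 0, fderiv ℝ f (x + s • w) w = lineDeriv ℝ g (x + s • w) w ∨
      fderiv ℝ f (x + s • w) w = 0 := (Eventually.of_forall fun _ => hpointwise _).frequently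
  exact (frequently_or_distrib.1 hfrequently).imp (deriv_eq_of_frequently_eq hline hc)
    (deriv_eq_of_frequently_eq hline (hasDerivAt_const _ _))

end LineDerivative

section Density

variable {α : Type*} [MeasurableSpace α] {μ : Measure α} [SigmaFinite μ]

theorem ae_eq_of_withDensity_ofReal_eq {f g : α → ℝ} (hf : AEMeasurable f μ)
    (hg : AEMeasurable g μ) (hpos : ∀ x, 0 < g x)
    (h : μ.withDensity (fun x => ENNReal.ofReal (f x)) =
      μ.withDensity fun x => ENNReal.ofReal (g x)) : f =ᵐ[μ] g := by
  filter_upwards [(withDensity_eq_iff_of_sigmaFinite hf.ennreal_ofReal hg.ennreal_ofReal).1 h]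
    with x hx
  have hfx : 0 < f x := by rw [← ENNReal.ofReal_pos, hx, ENNReal.ofReal_pos]; exact hpos x
  exact (ENNReal.ofReal_eq_ofReal_iff hfx.le (hpos x).le).1 hx

theorem ae_le_of_withDensity_le {f g : α → ℝ≥0∞} (hg : Measurable g)
    (h : μ.withDensity g ≤ μ.withDensity f) : g ≤ᵐ[μ] f :=
  ae_le_of_forall_setLIntegral_le_of_sigmaFinite hg fun s hs _ => by
    simpa only [withDensity_apply _ hs] using h s

variable [TopologicalSpace α] [OpensMeasurableSpace α] [IsLocallyFiniteMeasure μ]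
  [μ.IsOpenPosMeasure]

/- A non-measurable `f` need not agree with `g` almost everywhere. It still dominates `g`, and the
lower integral does not allow it to exceed `g` by a fixed amount on a whole open set. -/
theorem frequently_le_and_lt_of_withDensity_eq {f g : α → ℝ≥0∞} (hg : Continuous g)
    (h : μ.withDensity f = μ.withDensity g) {y : α} {c : ℝ≥0∞} (hc : g y < c) :
    ∃ᶠ x in 𝓝 y, g x ≤ f x ∧ f x < c := by
  intro hnot
  obtain ⟨b, hgb, hbc⟩ := exists_between hc
  obtain ⟨U, hU, hUo, hyU⟩ := eventually_nhds_iff.1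
    (hnot.and (hg.continuousAt.eventually_lt continuousAt_const hgb))
  obtain ⟨V, hyV, hVo, hV⟩ := μ.exists_isOpen_measure_lt_top y
  have hWm : MeasurableSet (U ∩ V) := (hUo.inter hVo).measurableSet
  have hcf : ∀ᵐ x ∂μ.restrict (U ∩ V), c ≤ f x := by
    have hgf := ae_restrict_of_ae (s := U ∩ V) (ae_le_of_withDensity_le hg.measurable h.ge)
    filter_upwards [ae_restrict_mem hWm, hgf] with x hx hgf
    exact not_lt.1 fun hfc => (hU x hx.1).1 ⟨hgf, hfc⟩
  have hle : c * μ (U ∩ V) ≤ b * μ (U ∩ V) :=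
    calc c * μ (U ∩ V) = ∫⁻ _ in U ∩ V, c ∂μ := (setLIntegral_const _ _).symm
      _ ≤ ∫⁻ x in U ∩ V, f x ∂μ := lintegral_mono_ae hcf
      _ = ∫⁻ x in U ∩ V, g x ∂μ := by rw [← withDensity_apply _ hWm, h, withDensity_apply _ hWm]
      _ ≤ ∫⁻ _ in U ∩ V, b ∂μ := setLIntegral_mono measurable_const fun x hx => (hU x hx.1).2.le
      _ = b * μ (U ∩ V) := setLIntegral_const _ _
  have hpos : μ (U ∩ V) ≠ 0 := ((hUo.inter hVo).measure_pos μ ⟨y, hyU, hyV⟩).ne'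
  have hfin : μ (U ∩ V) ≠ ∞ := measure_ne_top_of_subset inter_subset_right hV.ne
  exact hle.not_gt ((ENNReal.mul_lt_mul_iff_left hpos hfin).2 hbc)

theorem mapClusterPt_of_withDensity_ofReal_eq {f g : α → ℝ} (hg : Continuous g)
    (hpos : ∀ x, 0 < g x)
    (h : μ.withDensity (fun x => ENNReal.ofReal (f x)) =
      μ.withDensity fun x => ENNReal.ofReal (g x)) (y : α) : MapClusterPt (g y) (𝓝 y) f := by
  refine mapClusterPt_iff_frequently.2 fun s hs => ?_
  obtain ⟨a, c, ⟨hay, hyc⟩, hac⟩ := mem_nhds_iff_exists_Ioo_subset.1 hs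
  have hc : ENNReal.ofReal (g y) < ENNReal.ofReal c :=
    (ENNReal.ofReal_lt_ofReal_iff ((hpos y).trans hyc)).2 hyc
  refine ((frequently_le_and_lt_of_withDensity_eq (ENNReal.continuous_ofReal.comp hg) h
    hc).and_eventually (continuousAt_const.eventually_lt hg.continuousAt hay)).mono ?_
  rintro x ⟨⟨hgf, hfc⟩, hax⟩
  have hgf : g x ≤ f x := (ENNReal.ofReal_le_ofReal_iff'.1 hgf).resolve_right (hpos x).not_ge
  exact hac ⟨hax.trans_le hgf, (ENNReal.ofReal_lt_ofReal_iff'.1 hfc).1⟩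

end Density

section Mixture

variable {E : Type*} [NormedAddCommGroup E] [InnerProductSpace ℝ E]

theorem variance_inner_le_of_ae_mem_closedBall [MeasurableSpace E] [BorelSpace E]
    {μ : Measure E} [IsProbabilityMeasure μ] {c : E} {R : ℝ}
    (h : ∀ᵐ z ∂μ, z ∈ Metric.closedBall c R) (w : E) :
    Var[fun z => ⟪z, w⟫; μ] ≤ R ^ 2 * ‖w‖ ^ 2 := by
  have hbound : ∀ᵐ z ∂μ, ⟪z, w⟫ ∈ Icc (⟪c, w⟫ - R * ‖w‖) (⟪c, w⟫ + R * ‖w‖) := by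
    filter_upwards [h] with z hz
    have hzc : |⟪z, w⟫ - ⟪c, w⟫| ≤ R * ‖w‖ := by
      rw [← inner_sub_left]
      exact (abs_real_inner_le_norm _ _).trans
        (mul_le_mul_of_nonneg_right (mem_closedBall_iff_norm.1 hz) (norm_nonneg w))
    exact ⟨by linarith [abs_le.1 hzc], by linarith [abs_le.1 hzc]⟩
  refine (ProbabilityTheory.variance_le_sq_of_bounded hbound
    (Continuous.aemeasurable (by fun_prop))).trans_eq ?_
  ring

/-- The Cameron–Martin density of the translate of the standard Gaussian measure by `z`, with
respect to the standard Gaussian measure itself. -/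
def shiftDensity (z x : E) : ℝ := Real.exp (⟪z, x⟫ - ‖z‖ ^ 2 / 2)

theorem shiftDensity_pos (z x : E) : 0 < shiftDensity z x := Real.exp_pos _

theorem shiftDensity_eq_exp_mul_exp (z x : E) :
    shiftDensity z x = Real.exp (‖x‖ ^ 2 / 2) * Real.exp (-‖x - z‖ ^ 2 / 2) := by
  rw [shiftDensity, ← Real.exp_add, norm_sub_sq_real, real_inner_comm]
  ring_nf

theorem shiftDensity_smul_add_smul {a s : ℝ} (h : a ^ 2 + s ^ 2 = 1) (z x y : E) :
    shiftDensity z (a • x + s • y) = shiftDensity (a • z) x * shiftDensity (s • z) y := by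
  simp only [shiftDensity, ← Real.exp_add, inner_add_right, real_inner_smul_left,
    real_inner_smul_right, norm_smul, mul_pow, Real.norm_eq_abs, sq_abs]
  congr 1
  linear_combination (‖z‖ ^ 2 / 2) * h

theorem continuous_shiftDensity : Continuous fun p : E × E => shiftDensity p.1 p.2 := by
  unfold shiftDensity
  fun_prop

variable [MeasurableSpace E] (ν : Measure E)

/-- The density of `γ ⋆ ν` with respect to the standard Gaussian measure `γ`, as the mixture of the
densities of the translates of `γ`. -/
def mixtureDensity (x : E) : ℝ := ∫ z, shiftDensity z x ∂ν

/-- The conditional law of `Z ∼ ν` given `Z + G = x`, where `G` is an independent standard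
Gaussian vector. -/
def posterior (x : E) : Measure E := ν.tilted fun z => ⟪z, x⟫ - ‖z‖ ^ 2 / 2

theorem mixtureDensity_nonneg (x : E) : 0 ≤ mixtureDensity ν x :=
  integral_nonneg fun z => (shiftDensity_pos z x).le

variable [BorelSpace E] [IsFiniteMeasure ν]

theorem integrable_shiftDensity (x : E) : Integrable (fun z => shiftDensity z x) ν := by
  refine Integrable.of_bound (C := Real.exp (‖x‖ ^ 2 / 2))
    (continuous_shiftDensity.comp (Continuous.prodMk_left x)).aestronglyMeasurable
    (ae_of_all _ fun z => ?_)
  rw [Real.norm_of_nonneg (shiftDensity_pos z x).le, shiftDensity_eq_exp_mul_exp]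
  exact mul_le_of_le_one_right (Real.exp_pos _).le
    (Real.exp_le_one_iff.2 (by linarith [sq_nonneg ‖x - z‖]))

theorem ofReal_mixtureDensity (x : E) :
    ENNReal.ofReal (mixtureDensity ν x) = ∫⁻ z, ENNReal.ofReal (shiftDensity z x) ∂ν :=
  ofReal_integral_eq_lintegral_ofReal (integrable_shiftDensity ν x)
    (ae_of_all _ fun z => (shiftDensity_pos z x).le)

theorem continuous_mixtureDensity : Continuous (mixtureDensity ν) := by
  have hconv : Continuous fun x => ∫ z, Real.exp (-‖x - z‖ ^ 2 / 2) ∂ν := by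
    refine continuous_of_dominated (bound := fun _ => 1)
      (fun x => Continuous.aestronglyMeasurable (by fun_prop)) (fun x => ae_of_all _ fun z => ?_)
      (integrable_const 1) (ae_of_all _ fun z => by fun_prop)
    rw [Real.norm_of_nonneg (Real.exp_pos _).le]
    exact Real.exp_le_one_iff.2 (by linarith [sq_nonneg ‖x - z‖])
  have heq : mixtureDensity ν =
      fun x => Real.exp (‖x‖ ^ 2 / 2) * ∫ z, Real.exp (-‖x - z‖ ^ 2 / 2) ∂ν := by
    ext x
    simp only [mixtureDensity, shiftDensity_eq_exp_mul_exp, integral_const_mul]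
  rw [heq]
  fun_prop

theorem integrableExpSet_inner_posterior (x w : E) :
    ProbabilityTheory.integrableExpSet (fun z => ⟪z, w⟫) (posterior ν x) = univ := by
  refine eq_univ_of_forall fun s =>
    (integrable_tilted_iff (integrable_shiftDensity ν x) _).2 ?_
  refine (integrable_shiftDensity ν (x + s • w)).congr (ae_of_all _ fun z => ?_)
  simp only [shiftDensity, smul_eq_mul, ← Real.exp_add, inner_add_right, real_inner_smul_right]
  ring_nf

variable [NeZero ν]

theorem mixtureDensity_pos (x : E) : 0 < mixtureDensity ν x :=
  integral_exp_pos (integrable_shiftDensity ν x)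

instance isProbabilityMeasure_posterior (x : E) : IsProbabilityMeasure (posterior ν x) :=
  isProbabilityMeasure_tilted (integrable_shiftDensity ν x)

theorem variance_inner_posterior_le {c : E} {R : ℝ} (h : ∀ᵐ z ∂ν, z ∈ Metric.closedBall c R)
    (x w : E) : Var[fun z => ⟪z, w⟫; posterior ν x] ≤ R ^ 2 * ‖w‖ ^ 2 := by
  have hball : ∀ᵐ z ∂posterior ν x, z ∈ Metric.closedBall c R :=
    (tilted_absolutelyContinuous ν _).ae_le h
  exact variance_inner_le_of_ae_mem_closedBall hball w

theorem log_mixtureDensity_add_smul (x w : E) (s : ℝ) :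
    Real.log (mixtureDensity ν (x + s • w)) = Real.log (mixtureDensity ν x) +
      ProbabilityTheory.cgf (fun z => ⟪z, w⟫) (posterior ν x) s := by
  have hmgf : ProbabilityTheory.mgf (fun z => ⟪z, w⟫) (posterior ν x) s =
      mixtureDensity ν (x + s • w) / mixtureDensity ν x := by
    rw [ProbabilityTheory.mgf, posterior, integral_exp_tilted, mixtureDensity, mixtureDensity]
    congr 2 with z
    simp only [shiftDensity, Pi.add_apply, inner_add_right, real_inner_smul_right]
    ring_nf
  rw [ProbabilityTheory.cgf, hmgf,
    Real.log_div (mixtureDensity_pos ν _).ne' (mixtureDensity_pos ν x).ne']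
  ring

theorem hasLineDerivAt_lineDeriv_log_mixtureDensity (x w : E) :
    HasLineDerivAt ℝ (fun y => lineDeriv ℝ (fun u => Real.log (mixtureDensity ν u)) y w)
      Var[fun z => ⟪z, w⟫; posterior ν x] x w := by
  have hmem : (0 : ℝ) ∈ interior
      (ProbabilityTheory.integrableExpSet (fun z => ⟪z, w⟫) (posterior ν x)) := by
    simp only [integrableExpSet_inner_posterior, interior_univ, mem_univ]
  have hvar : Var[fun z => ⟪z, w⟫; posterior ν x] =
      deriv (deriv (ProbabilityTheory.cgf (fun z => ⟪z, w⟫) (posterior ν x))) 0 := by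
    simpa [iteratedDeriv_succ] using ProbabilityTheory.variance_tilted_mul hmem
  simp only [HasLineDerivAt, lineDeriv_add_smul, log_mixtureDensity_add_smul, deriv_const_add]
  rw [hvar]
  exact (ProbabilityTheory.analyticAt_cgf hmem).deriv.differentiableAt.hasDerivAt

end Mixture

section Gaussian

variable {d : ℕ}

theorem continuous_gaussPdf : Continuous (gaussPdf d) := by
  unfold gaussPdf
  fun_prop

theorem gaussPdf_pos (x : Ed d) : 0 < gaussPdf d x := by
  unfold gaussPdf
  positivity

theorem gaussPdf_sub (x z : Ed d) : gaussPdf d (x - z) = gaussPdf d x * shiftDensity z x := by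
  rw [gaussPdf, gaussPdf, shiftDensity_eq_exp_mul_exp, mul_assoc, ← mul_assoc (Real.exp _),
    ← Real.exp_add, ← add_div, neg_add_cancel, zero_div, Real.exp_zero, one_mul]

theorem integral_gaussPdf : ∫ x, gaussPdf d x = 1 := by
  have h := GaussianFourier.integral_rexp_neg_mul_sq_norm (V := Ed d) one_half_pos
  rw [finrank_euclideanSpace_fin, show π / (1 / 2) = 2 * π by ring] at h
  simp only [gaussPdf, integral_const_mul]
  simp only [show ∀ x : Ed d, -‖x‖ ^ 2 / 2 = -(1 / 2) * ‖x‖ ^ 2 from fun x => by ring]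
  rw [h, ← Real.rpow_add (by positivity), neg_div, neg_add_cancel, Real.rpow_zero]

theorem measurable_ofReal_gaussPdf : Measurable fun x => ENNReal.ofReal (gaussPdf d x) :=
  continuous_gaussPdf.measurable.ennreal_ofReal

theorem stdGaussian_eq_withDensity_gaussPdf :
    stdGaussian d = volume.withDensity fun x => ENNReal.ofReal (gaussPdf d x) := rfl

instance isProbabilityMeasure_stdGaussian : IsProbabilityMeasure (stdGaussian d) := by
  have hint : Integrable (gaussPdf d) := by
    by_contra hnot
    exact zero_ne_one ((integral_undef hnot).symm.trans integral_gaussPdf)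
  constructor
  rw [stdGaussian_eq_withDensity_gaussPdf, withDensity_apply _ .univ, setLIntegral_univ,
    ← ofReal_integral_eq_lintegral_ofReal hint (ae_of_all _ fun x => (gaussPdf_pos x).le),
    integral_gaussPdf, ENNReal.ofReal_one]

theorem stdGaussian_absolutelyContinuous_volume : stdGaussian d ≪ volume :=
  withDensity_absolutelyContinuous _ _

theorem volume_absolutelyContinuous_stdGaussian : volume ≪ stdGaussian d :=
  withDensity_absolutelyContinuous' measurable_ofReal_gaussPdf.aemeasurable
    (ae_of_all _ fun x => (ENNReal.ofReal_pos.2 (gaussPdf_pos x)).ne')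

instance isOpenPosMeasure_stdGaussian : (stdGaussian d).IsOpenPosMeasure :=
  volume_absolutelyContinuous_stdGaussian.isOpenPosMeasure

theorem quasiMeasurePreserving_add_smul_stdGaussian (b : Ed d) {s : ℝ} (hs : s ≠ 0) :
    Measure.QuasiMeasurePreserving (fun y => b + s • y) (stdGaussian d) (stdGaussian d) :=
  ((measurePreserving_add_left volume b).quasiMeasurePreserving.comp
    (Measure.quasiMeasurePreserving_smul volume hs)).mono
    stdGaussian_absolutelyContinuous_volume volume_absolutelyContinuous_stdGaussian

theorem lintegral_add_right_stdGaussian (z : Ed d) {φ : Ed d → ℝ≥0∞} (hφ : Measurable φ) :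
    ∫⁻ y, φ (y + z) ∂stdGaussian d =
      ∫⁻ y, ENNReal.ofReal (shiftDensity z y) * φ y ∂stdGaussian d := by
  have hshift : Measurable fun y : Ed d => ENNReal.ofReal (shiftDensity z y) :=
    (continuous_shiftDensity.comp (Continuous.prodMk_right z)).measurable.ennreal_ofReal
  calc ∫⁻ y, φ (y + z) ∂stdGaussian d = ∫⁻ y, ENNReal.ofReal (gaussPdf d y) * φ (y + z) :=
        lintegral_withDensity_eq_lintegral_mul _ measurable_ofReal_gaussPdf (by fun_prop)
    _ = ∫⁻ y, ENNReal.ofReal (gaussPdf d (y - z)) * φ y := by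
        rw [← lintegral_sub_right_eq_self _ z]
        simp only [sub_add_cancel]
    _ = ∫⁻ y, ENNReal.ofReal (gaussPdf d y) * (ENNReal.ofReal (shiftDensity z y) * φ y) := by
        simp only [gaussPdf_sub, ENNReal.ofReal_mul (gaussPdf_pos _).le, mul_assoc]
    _ = ∫⁻ y, ENNReal.ofReal (shiftDensity z y) * φ y ∂stdGaussian d :=
        (lintegral_withDensity_eq_lintegral_mul _ measurable_ofReal_gaussPdf
          (hshift.mul hφ)).symm

theorem lintegral_shiftDensity (z : Ed d) :
    ∫⁻ y, ENNReal.ofReal (shiftDensity z y) ∂stdGaussian d = 1 := by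
  simpa using (lintegral_add_right_stdGaussian z (φ := fun _ => 1) measurable_const).symm

theorem mconv_stdGaussian (ν : Measure (Ed d)) [IsFiniteMeasure ν] :
    mconv (stdGaussian d) ν =
      (stdGaussian d).withDensity fun x => ENNReal.ofReal (mixtureDensity ν x) := by
  ext A hA
  have hind : Measurable (A.indicator (1 : Ed d → ℝ≥0∞)) := measurable_one.indicator hA
  have hadd : Measurable fun p : Ed d × Ed d => p.1 + p.2 := by fun_prop
  have hshift : Measurable fun p : Ed d × Ed d => ENNReal.ofReal (shiftDensity p.1 p.2) :=
    continuous_shiftDensity.measurable.ennreal_ofReal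
  calc mconv (stdGaussian d) ν A = ∫⁻ x, A.indicator 1 x ∂mconv (stdGaussian d) ν :=
        (lintegral_indicator_one hA).symm
    _ = ∫⁻ z, ∫⁻ y, A.indicator 1 (y + z) ∂stdGaussian d ∂ν := by
        rw [mconv, lintegral_map hind hadd]
        exact lintegral_prod_symm _ (hind.comp hadd).aemeasurable
    _ = ∫⁻ z, ∫⁻ y, ENNReal.ofReal (shiftDensity z y) * A.indicator 1 y ∂stdGaussian d ∂ν :=
        lintegral_congr fun z => lintegral_add_right_stdGaussian z hind
    _ = ∫⁻ y, ∫⁻ z, ENNReal.ofReal (shiftDensity z y) * A.indicator 1 y ∂ν ∂stdGaussian d :=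
        lintegral_lintegral_swap (hshift.mul (hind.comp measurable_snd)).aemeasurable
    _ = ∫⁻ y, A.indicator (fun y => ENNReal.ofReal (mixtureDensity ν y)) y ∂stdGaussian d := by
        refine lintegral_congr fun y => ?_
        by_cases hy : y ∈ A <;> simp [hy, ofReal_mixtureDensity]
    _ = (stdGaussian d).withDensity (fun x => ENNReal.ofReal (mixtureDensity ν x)) A := by
        rw [withDensity_apply _ hA, lintegral_indicator hA]

end Gaussian

section OrnsteinUhlenbeck

variable {d : ℕ} {t : ℝ}

theorem exp_neg_two_mul (t : ℝ) : Real.exp (-2 * t) = Real.exp (-t) ^ 2 := by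
  rw [← Real.exp_nat_mul]
  congr 1
  push_cast
  ring

theorem sqrt_one_sub_exp_neg_two_mul_ne_zero (ht : 0 < t) : √(1 - Real.exp (-2 * t)) ≠ 0 :=
  (Real.sqrt_pos.2 (sub_pos.2 (Real.exp_lt_one_iff.2 (by linarith)))).ne'

theorem OU_zero (f : Ed d → ℝ) : OU 0 f = f := by
  ext x
  simp [OU]

theorem lintegral_mixtureDensity_smul_add_smul (ν : Measure (Ed d)) [IsFiniteMeasure ν] {a s : ℝ}
    (h : a ^ 2 + s ^ 2 = 1) (x : Ed d) :
    ∫⁻ y, ENNReal.ofReal (mixtureDensity ν (a • x + s • y)) ∂stdGaussian d =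
      ENNReal.ofReal (mixtureDensity (ν.map (a • ·)) x) := by
  have hmeas : Measurable fun p : Ed d × Ed d =>
      ENNReal.ofReal (shiftDensity p.2 (a • x + s • p.1)) :=
    (continuous_shiftDensity.comp (by fun_prop :
      Continuous fun p : Ed d × Ed d => (p.2, a • x + s • p.1))).measurable.ennreal_ofReal
  have hmap : Measurable fun z : Ed d => ENNReal.ofReal (shiftDensity z x) :=
    (continuous_shiftDensity.comp (Continuous.prodMk_left x)).measurable.ennreal_ofReal
  calc ∫⁻ y, ENNReal.ofReal (mixtureDensity ν (a • x + s • y)) ∂stdGaussian d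
    _ = ∫⁻ y, ∫⁻ z, ENNReal.ofReal (shiftDensity z (a • x + s • y)) ∂ν ∂stdGaussian d := by
        simp only [ofReal_mixtureDensity]
    _ = ∫⁻ z, ∫⁻ y, ENNReal.ofReal (shiftDensity z (a • x + s • y)) ∂stdGaussian d ∂ν :=
        lintegral_lintegral_swap hmeas.aemeasurable
    _ = ∫⁻ z, ENNReal.ofReal (shiftDensity (a • z) x) ∂ν := by
        simp only [shiftDensity_smul_add_smul h, ENNReal.ofReal_mul (shiftDensity_pos _ _).le,
          lintegral_const_mul' _ _ ENNReal.ofReal_ne_top, lintegral_shiftDensity, mul_one]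
    _ = ENNReal.ofReal (mixtureDensity (ν.map (a • ·)) x) := by
        rw [ofReal_mixtureDensity, lintegral_map hmap (by fun_prop)]

theorem OU_mixtureDensity (ν : Measure (Ed d)) [IsFiniteMeasure ν] (ht : 0 ≤ t) :
    OU t (mixtureDensity ν) = mixtureDensity (ν.map (Real.exp (-t) • ·)) := by
  ext x
  have has : Real.exp (-t) ^ 2 + √(1 - Real.exp (-2 * t)) ^ 2 = 1 := by
    have hle : Real.exp (-2 * t) ≤ 1 := Real.exp_le_one_iff.2 (by linarith)
    rw [Real.sq_sqrt (sub_nonneg.2 hle), exp_neg_two_mul, add_sub_cancel]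
  have hcont := continuous_mixtureDensity ν
  rw [OU, integral_eq_lintegral_of_nonneg_ae (ae_of_all _ fun y => mixtureDensity_nonneg ν _)
    (Continuous.aestronglyMeasurable (by fun_prop)), lintegral_mixtureDensity_smul_add_smul ν has,
    ENNReal.toReal_ofReal (mixtureDensity_nonneg _ x)]

theorem OU_congr_ae (ht : 0 < t) {f g : Ed d → ℝ} (h : f =ᵐ[stdGaussian d] g) :
    OU t f = OU t g := by
  ext x
  have hqmp := quasiMeasurePreserving_add_smul_stdGaussian (Real.exp (-t) • x)
    (sqrt_one_sub_exp_neg_two_mul_ne_zero ht)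
  exact integral_congr_ae (hqmp.ae_eq_comp h)

theorem OU_eq_zero_of_not_aemeasurable (ht : 0 < t) {f : Ed d → ℝ}
    (hf : ¬AEMeasurable f (stdGaussian d)) : OU t f = 0 := by
  ext x
  refine integral_non_aestronglyMeasurable fun h => hf ?_
  set a := Real.exp (-t)
  set s := √(1 - Real.exp (-2 * t))
  have hs : s ≠ 0 := sqrt_one_sub_exp_neg_two_mul_ne_zero ht
  refine (h.aemeasurable.comp_quasiMeasurePreserving
    (quasiMeasurePreserving_add_smul_stdGaussian (-(s⁻¹ • a • x)) (inv_ne_zero hs))).congr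
    (ae_of_all _ fun y => ?_)
  simp only [Function.comp_apply, smul_add, smul_neg, smul_inv_smul₀ hs, add_neg_cancel_left]

theorem mapClusterPt_OU_or_OU_eq_zero {ν : Measure (Ed d)} [IsFiniteMeasure ν] [NeZero ν]
    {f : Ed d → ℝ} (hf : mconv (stdGaussian d) ν =
      (stdGaussian d).withDensity fun x => ENNReal.ofReal (f x)) (ht : 0 ≤ t) :
    (∀ y, MapClusterPt (mixtureDensity (ν.map (Real.exp (-t) • ·)) y) (𝓝 y) (OU t f)) ∨
      OU t f = 0 := by
  have hdensity := hf.symm.trans (mconv_stdGaussian ν)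
  have hcont := continuous_mixtureDensity ν
  have hpos := mixtureDensity_pos ν
  obtain rfl | htpos := ht.eq_or_lt
  · simp only [← OU_mixtureDensity ν le_rfl, OU_zero]
    exact Or.inl (mapClusterPt_of_withDensity_ofReal_eq hcont hpos hdensity)
  · by_cases hmeas : AEMeasurable f (stdGaussian d)
    · rw [OU_congr_ae htpos (ae_eq_of_withDensity_ofReal_eq hmeas hcont.measurable.aemeasurable
        hpos hdensity), OU_mixtureDensity ν ht]
      exact Or.inl fun y => (continuous_mixtureDensity _).continuousAt.tendsto.mapClusterPt
    · exact Or.inr (OU_eq_zero_of_not_aemeasurable htpos hmeas)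

end OrnsteinUhlenbeck

section Hessian

variable {d : ℕ}

theorem ae_mem_of_msupport_subset {ν : Measure (Ed d)} {S : Set (Ed d)} (h : msupport ν ⊆ S) :
    ∀ᵐ z ∂ν, z ∈ S := by
  filter_upwards [Measure.support_mem_ae (μ := ν)] with z hz
  exact h fun U hU hzU => (Measure.mem_support_iff_forall z |>.1 hz U (hU.mem_nhds hzU)).ne'

theorem ae_map_smul_mem_closedBall {E : Type*} [NormedAddCommGroup E] [NormedSpace ℝ E]
    [MeasurableSpace E] [BorelSpace E] {μ : Measure E} {c : E} {R : ℝ}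
    (h : ∀ᵐ z ∂μ, z ∈ Metric.closedBall c R) (a : ℝ) :
    ∀ᵐ z ∂μ.map (a • ·), z ∈ Metric.closedBall (a • c) (|a| * R) := by
  refine (ae_map_iff (by fun_prop) Metric.isClosed_closedBall.measurableSet).2 (h.mono ?_)
  intro z hz
  rw [dist_smul₀]
  exact mul_le_mul_of_nonneg_left hz (abs_nonneg a)

theorem hessQF_log_le_of_mapClusterPt {ν : Measure (Ed d)} [IsFiniteMeasure ν] [NeZero ν]
    {c : Ed d} {R : ℝ} (h : ∀ᵐ z ∂ν, z ∈ Metric.closedBall c R) {g : Ed d → ℝ}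
    (hg : ∀ y, MapClusterPt (mixtureDensity ν y) (𝓝 y) g) (x w : Ed d) :
    hessQF (fun y => Real.log (g y)) x w ≤ R ^ 2 * ‖w‖ ^ 2 := by
  have hlog (y : Ed d) :
      MapClusterPt (Real.log (mixtureDensity ν y)) (𝓝 y) fun y => Real.log (g y) :=
    (hg y).continuousAt_comp (Real.continuousAt_log (mixtureDensity_pos ν y).ne')
  obtain hvar | hzero := hessQF_eq_or_eq_zero_of_mapClusterPt hlog
    (hasLineDerivAt_lineDeriv_log_mixtureDensity ν x w)
  · exact hvar.trans_le (variance_inner_posterior_le ν h x w)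
  · exact hzero.trans_le (by positivity)

end Hessian

theorem ou_hessian_upper_bound_mixture_general
    (d : ℕ) (c : Ed d) (R : ℝ) (ν : Measure (Ed d)) [IsFiniteMeasure ν] [NeZero ν]
    (hν : msupport ν ⊆ Metric.closedBall c R)
    (f : Ed d → ℝ)
    (hf : mconv (stdGaussian d) ν
      = (stdGaussian d).withDensity fun x => ENNReal.ofReal (f x)) :
    ∀ t ≥ (0 : ℝ), ∀ x w : Ed d,
      hessQF (fun y => Real.log (OU t f y)) x w ≤ Real.exp (-2 * t) * R ^ 2 * ‖w‖ ^ 2 := by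
  intro t ht x w
  have hmeas : AEMeasurable (Real.exp (-t) • · : Ed d → Ed d) ν := by fun_prop
  have : NeZero (ν.map (Real.exp (-t) • ·)) := ⟨(Measure.map_ne_zero_iff hmeas).2 (NeZero.ne ν)⟩
  have hball := ae_map_smul_mem_closedBall (ae_mem_of_msupport_subset hν) (Real.exp (-t))
  rw [exp_neg_two_mul, ← sq_abs, ← mul_pow]
  obtain hcluster | hzero := mapClusterPt_OU_or_OU_eq_zero hf ht
  · exact hessQF_log_le_of_mapClusterPt hball hcluster x w
  · simp only [hzero, hessQF, Pi.zero_apply, Real.log_zero, fderiv_fun_const, zero_apply]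
    positivity

/-- For `μ = γ_d ⋆ ν` with `ν` supported in a ball of radius `R`, and
`f = dμ/dγ_d`, one has `∇² log Q_t f(x) ⪯ e^{−2t}·R²·Id` for every `t ≥ 0` and `x`. -/
theorem ou_hessian_upper_bound_mixture
    (d : ℕ) (R : ℝ) (ν : Measure (Ed d)) [IsProbabilityMeasure ν]
    (hν : msupport ν ⊆ Metric.closedBall 0 R)
    (f : Ed d → ℝ)
    (hf : mconv (stdGaussian d) ν
      = (stdGaussian d).withDensity fun x => ENNReal.ofReal (f x)) :
    ∀ t ≥ (0 : ℝ), ∀ x w : Ed d,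
      hessQF (fun y => Real.log (OU t f y)) x w ≤ Real.exp (-2 * t) * R ^ 2 * ‖w‖ ^ 2 :=
  ou_hessian_upper_bound_mixture_general d 0 R ν hν f hf
end
end
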